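/- In the imitative monomer-dimer mean-field model with parameters J ≥ 0 and h ∈ ℝ: (i) if (J,h) ∉ Γ ∪ {(J_c,h_c)}, then for 0 ≤ z ≤ n^{1/6}, P(n^{1/2}(m(σ)−m₀) ≥ z)/P(Z₀ > z) = 1 + O(1)·n^{−1/2}(1+z³), where Z₀ is a centered Gaussian random variable with variance λ₀ = −(H''(m₀))^{−1} − (2J)^{−1} and m₀ is the unique maximizer of H; (ii) if (J,h) = (J_c,h_c), then for 0 ≤ z ≤ n^{1/20}, P(n^{1/4}(m(σ)−m_c) ≥ z)/P(Y ≥ z) = 1 + O(1)·n^{−1/4}(1+z⁵), where m_c = 2−√2 and Y has density p(y) = c₁·e^{−λ_c y⁴/24} with λ_c = −H^{(4)}(m_c) > 0 and normalizing constant c₁. -/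

import Mathlib

open MeasureTheory Real

/-- `g(x) = ½(√(e^{4x} + 4e^{2x}) − e^{2x})`. -/
noncomputable def mdg (x : ℝ) : ℝ :=
  (Real.sqrt (Real.exp (4 * x) + 4 * Real.exp (2 * x)) - Real.exp (2 * x)) / 2

/-- `τ(x) = (2x − 1)J + h`. -/
def mdtau (J h x : ℝ) : ℝ := (2 * x - 1) * J + h

/-- `H(x) = −Jx² − ½(1 − g(τ(x)) + log(1 − g(τ(x))))`. -/
noncomputable def mdH (J h x : ℝ) : ℝ :=
  -J * x ^ 2 - (1 - mdg (mdtau J h x) + Real.log (1 - mdg (mdtau J h x))) / 2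

/-- `J_c = 1/(4(3 − 2√2))`. -/
noncomputable def Jc : ℝ := 1 / (4 * (3 - 2 * Real.sqrt 2))

/-- `h_c = ½ log(2√2 − 2) − ¼`. -/
noncomputable def hcrit : ℝ := Real.log (2 * Real.sqrt 2 - 2) / 2 - 1 / 4

/-- The number of dimer configurations (perfect matchings) of the complete graph
on `j` vertices: `j!/(2^{j/2} (j/2)!)` for even `j` and `0` for odd `j`. -/
def pmCount (j : ℕ) : ℕ :=
  if Even j then j.factorial / (2 ^ (j / 2) * (j / 2).factorial) else 0

/-- The number of monomers of a configuration `σ ∈ {0,1}ⁿ`. -/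
def monomerNum {n : ℕ} (σ : Fin n → Bool) : ℕ :=
  (Finset.univ.filter fun i => σ i = true).card

/-- The monomer density `m(σ)`. -/
noncomputable def mdens {n : ℕ} (σ : Fin n → Bool) : ℝ := (monomerNum σ : ℝ) / n

/-- The Gibbs weight `D(σ) e^{−T(σ)}` with
`−T(σ) = n(J m(σ)² + b m(σ))`, `b = (log n)/2 + h − J`. -/
noncomputable def mdweight (J h : ℝ) (n : ℕ) (σ : Fin n → Bool) : ℝ :=
  (pmCount (n - monomerNum σ) : ℝ) *
    Real.exp (n * (J * mdens σ ^ 2 + (Real.log n / 2 + h - J) * mdens σ))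

open scoped Classical in
/-- The probability of an event `A` under the imitative monomer–dimer Gibbs measure. -/
noncomputable def mdProb (J h : ℝ) (n : ℕ) (A : Set (Fin n → Bool)) : ℝ :=
  (∑ σ ∈ Finset.univ.filter (fun σ => σ ∈ A), mdweight J h n σ) /
    ∑ σ : Fin n → Bool, mdweight J h n σ


/-- Monomer density with `d` dimers. -/
noncomputable def mdm (n d : ℕ) : ℝ := ((n : ℝ) - 2 * d) / n

/-- The total weight of configurations with `d` dimers. -/
noncomputable def mdW (J h : ℝ) (n d : ℕ) : ℝ :=
  (n.factorial : ℝ) / ((n - 2 * d).factorial * (2 ^ d * d.factorial)) *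
    Real.exp (n * (J * mdm n d ^ 2 + (Real.log n / 2 + h - J) * mdm n d))

lemma mdW_pos (J h : ℝ) (n d : ℕ) : 0 < mdW J h n d := by
  unfold mdW; positivity

lemma sum_config (n : ℕ) (φ : ℕ → ℝ) :
    ∑ σ : Fin n → Bool, φ (monomerNum σ) =
      ∑ k ∈ Finset.range (n + 1), (n.choose k : ℝ) * φ k := by
  classical
  have h1 : ∑ σ : Fin n → Bool, φ (monomerNum σ) = ∑ s : Finset (Fin n), φ s.card := by
    refine Fintype.sum_equiv
      { toFun := fun σ => Finset.univ.filter fun i => σ i = true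
        invFun := fun s i => decide (i ∈ s)
        left_inv := ?_
        right_inv := ?_ } _ _ ?_
    · intro σ; funext i; simp
    · intro s; ext i; simp
    · intro σ; rfl
  rw [h1]
  have h2 := Finset.sum_powerset_apply_card φ (x := (Finset.univ : Finset (Fin n)))
  simp only [Finset.powerset_univ, Finset.card_univ, Fintype.card_fin, nsmul_eq_mul] at h2
  exact h2

lemma pmCount_even (d : ℕ) :
    (pmCount (2 * d) : ℝ) = ((2 * d).factorial : ℝ) / (2 ^ d * d.factorial) := by
  have hd : 2 ^ d * d.factorial ∣ (2 * d).factorial := by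
    rcases d with _ | d
    · simp
    · have := Nat.factorial_eq_mul_doubleFactorial (2 * d + 1)
      have h2 := Nat.doubleFactorial_two_mul (d + 1)
      rw [show 2 * d + 1 + 1 = 2 * (d + 1) by ring] at this
      rw [this, h2]
      exact dvd_mul_right _ _
  unfold pmCount
  rw [if_pos (even_two_mul d), show 2 * d / 2 = d by omega, Nat.cast_div hd (by positivity)]
  push_cast; rfl

lemma sum_weights (J h : ℝ) (n : ℕ) (P : ℝ → Prop) [DecidablePred P] :
    ∑ k ∈ Finset.range (n + 1), (n.choose k : ℝ) *
      (if P ((k : ℝ) / n) then (pmCount (n - k) : ℝ) *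
        Real.exp (n * (J * ((k : ℝ) / n) ^ 2 + (Real.log n / 2 + h - J) * ((k : ℝ) / n))) else 0) =
    ∑ d ∈ Finset.range (n / 2 + 1), if P (mdm n d) then mdW J h n d else 0 := by
  symm
  refine Finset.sum_of_injOn (fun d => n - 2 * d) ?_ ?_ ?_ ?_
  · intro a ha b hb hab
    simp only [Finset.coe_range, Set.mem_Iio] at ha hb
    simp only at hab
    omega
  · intro a ha
    simp only [Finset.coe_range, Set.mem_Iio] at ha ⊢
    omega
  · intro k hk hk2
    simp only [Finset.mem_range] at hk
    have : ¬ Even (n - k) := by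
      rintro ⟨r, hr⟩
      apply hk2
      refine ⟨r, ?_, ?_⟩
      · simp only [Finset.coe_range, Set.mem_Iio]; omega
      · simp only; omega
    have h0 : pmCount (n - k) = 0 := by unfold pmCount; rw [if_neg this]
    rw [h0]; simp
  · intro d hd
    simp only [Finset.mem_range] at hd
    have hle : 2 * d ≤ n := by omega
    have hm : ((n - 2 * d : ℕ) : ℝ) / n = mdm n d := by
      unfold mdm; rw [Nat.cast_sub hle]; push_cast; rfl
    have h2 : n - (n - 2 * d) = 2 * d := by omega
    simp only [hm, h2]
    by_cases hP : P (mdm n d)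
    · rw [if_pos hP, if_pos hP, pmCount_even, Nat.choose_symm hle, Nat.choose_eq_factorial_div_factorial hle,
        Nat.cast_div (Nat.factorial_mul_factorial_dvd_factorial hle) (by positivity)]
      unfold mdW
      push_cast
      have : ((2 * d).factorial : ℝ) ≠ 0 := by positivity
      field_simp
    · rw [if_neg hP, if_neg hP]; simp

lemma mdProb_eq (J h : ℝ) (n : ℕ) (P : ℝ → Prop) [DecidablePred P] :
    mdProb J h n {σ | P (mdens σ)} =
      (∑ d ∈ Finset.range (n / 2 + 1), if P (mdm n d) then mdW J h n d else 0) /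
        ∑ d ∈ Finset.range (n / 2 + 1), mdW J h n d := by
  classical
  unfold mdProb
  congr 1
  · rw [← sum_weights, ← sum_config n (fun k => if P ((k : ℝ) / n) then (pmCount (n - k) : ℝ) *
        Real.exp (n * (J * ((k : ℝ) / n) ^ 2 + (Real.log n / 2 + h - J) * ((k : ℝ) / n))) else 0),
        Finset.sum_filter]
    refine Finset.sum_congr rfl fun σ _ => ?_
    by_cases hP : P (mdens σ)
    · have hP2 : P ((monomerNum σ : ℝ) / n) := hP
      have hP3 : σ ∈ {σ : Fin n → Bool | P (mdens σ)} := hP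
      rw [if_pos hP3, if_pos hP2]; rfl
    · have hP2 : ¬ P ((monomerNum σ : ℝ) / n) := hP
      have hP3 : σ ∉ {σ : Fin n → Bool | P (mdens σ)} := hP
      rw [if_neg hP3, if_neg hP2]
  · have := sum_weights J h n (fun _ => True)
    simp only [if_true] at this
    rw [← this, ← sum_config n (fun k => (pmCount (n - k) : ℝ) *
        Real.exp (n * (J * ((k : ℝ) / n) ^ 2 + (Real.log n / 2 + h - J) * ((k : ℝ) / n))))]
    rfl


lemma log_fact_lower (n : ℕ) : (n : ℝ) * Real.log n - n ≤ Real.log n.factorial := by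
  induction n with
  | zero => simp
  | succ n ih =>
    rw [Nat.factorial_succ]
    push_cast
    rw [Real.log_mul (by positivity) (by positivity)]
    rcases Nat.eq_zero_or_pos n with h0 | hpos
    · subst h0; simp
    · have hn : (0 : ℝ) < n := by exact_mod_cast hpos
      have h1 : Real.log ((n + 1 : ℝ) / n) ≤ (n + 1 : ℝ) / n - 1 :=
        Real.log_le_sub_one_of_pos (by positivity)
      rw [Real.log_div (by positivity) (by positivity)] at h1
      have h2 : (n : ℝ) * (Real.log (n + 1) - Real.log n) ≤ 1 := by
        calc (n : ℝ) * (Real.log (n + 1) - Real.log n) ≤ n * ((n + 1 : ℝ) / n - 1) := by gcongr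
          _ = 1 := by field_simp; ring
      linarith

lemma log_fact_upper (n : ℕ) :
    Real.log n.factorial ≤ (n : ℝ) * Real.log n - n + Real.log n + 1 := by
  induction n with
  | zero => simp
  | succ n ih =>
    rw [Nat.factorial_succ]
    push_cast
    rw [Real.log_mul (by positivity) (by positivity)]
    rcases Nat.eq_zero_or_pos n with h0 | hpos
    · subst h0; simp
    · have hn : (0 : ℝ) < n := by exact_mod_cast hpos
      have h1 : 1 - ((n + 1 : ℝ) / n)⁻¹ ≤ Real.log ((n + 1 : ℝ) / n) :=
        Real.one_sub_inv_le_log_of_pos (by positivity)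
      rw [Real.log_div (by positivity) (by positivity)] at h1
      have h2 : 1 ≤ ((n : ℝ) + 1) * (Real.log (n + 1) - Real.log n) := by
        calc (1 : ℝ) = (n + 1) * (1 - ((n + 1 : ℝ) / n)⁻¹) := by field_simp; ring
          _ ≤ _ := by gcongr
      linarith

/-- The free energy. -/
noncomputable def mdF (J h m : ℝ) : ℝ :=
  J * m ^ 2 + (h - J) * m + Real.negMulLog m + Real.negMulLog (1 - m) / 2 + m / 2 - 1 / 2

lemma log_mdW (J h : ℝ) (n d : ℕ) : Real.log (mdW J h n d) =
    Real.log n.factorial - Real.log (n - 2 * d).factorial - d * Real.log 2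
      - Real.log d.factorial + n * (J * mdm n d ^ 2 + (Real.log n / 2 + h - J) * mdm n d) := by
  unfold mdW
  rw [Real.log_mul (by positivity) (by positivity), Real.log_div (by positivity) (by positivity),
    Real.log_mul (by positivity) (by positivity), Real.log_mul (by positivity) (by positivity),
    Real.log_exp, Real.log_pow]
  ring

lemma mdW_global (J h : ℝ) (n d : ℕ) (hn : 1 ≤ n) (hd : 2 * d ≤ n) :
    |Real.log (mdW J h n d) - n / 2 * Real.log n - n * mdF J h (mdm n d)| ≤
      2 * (Real.log n + 1) := by
  have hn0 : (0 : ℝ) < n := by exact_mod_cast hn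
  obtain ⟨k, hk⟩ : ∃ k, n - 2 * d = k := ⟨_, rfl⟩
  have hnk : (n : ℝ) = k + 2 * d := by
    have : n = k + 2 * d := by omega
    exact_mod_cast this
  have hm : mdm n d = k / n := by unfold mdm; rw [hnk]; ring
  have hlogle : ∀ j : ℕ, j ≤ n → Real.log j ≤ Real.log n := by
    intro j hj
    rcases Nat.eq_zero_or_pos j with h0 | hpos
    · subst h0; simp; exact Real.log_nonneg (by exact_mod_cast hn)
    · exact Real.log_le_log (by exact_mod_cast hpos) (by exact_mod_cast hj)
  have e1 : (n : ℝ) * Real.negMulLog (mdm n d) = - (k * Real.log k) + k * Real.log n := by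
    rw [hm, Real.negMulLog]
    rcases Nat.eq_zero_or_pos k with h0 | hpos
    · subst h0; simp
    · rw [Real.log_div (by positivity) (by positivity)]; field_simp; ring
  have e2 : (n : ℝ) * Real.negMulLog (1 - mdm n d) =
      - (2 * d * (Real.log 2 + Real.log d)) + 2 * d * Real.log n := by
    have : 1 - mdm n d = 2 * d / n := by rw [hm]; field_simp; linarith
    rw [this, Real.negMulLog]
    rcases Nat.eq_zero_or_pos d with h0 | hpos
    · subst h0; simp
    · rw [Real.log_div (by positivity) (by positivity), Real.log_mul (by positivity) (by positivity)]
      field_simp; ring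
  have a1 := log_fact_lower n
  have a2 := log_fact_upper n
  have b1 := log_fact_lower k
  have b2 := log_fact_upper k
  have c1 := log_fact_lower d
  have c2 := log_fact_upper d
  have lk := hlogle k (by omega)
  have ld := hlogle d (by omega)
  have key : Real.log (mdW J h n d) - n / 2 * Real.log n - n * mdF J h (mdm n d) =
      (Real.log n.factorial - (n * Real.log n - n)) - (Real.log k.factorial - (k * Real.log k - k))
       - (Real.log d.factorial - (d * Real.log d - d)) := by
    rw [log_mdW, hk]
    have e3 : (n : ℝ) * mdm n d = k := by rw [hm]; field_simp
    have : (n : ℝ) * mdF J h (mdm n d) = n * (J * mdm n d ^ 2) + (h - J) * (n * mdm n d)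
        + n * Real.negMulLog (mdm n d) + n * Real.negMulLog (1 - mdm n d) / 2 + (n * mdm n d) / 2
        - n / 2 := by unfold mdF; ring
    rw [this, e1, e2, e3]
    have : (n : ℝ) * (J * mdm n d ^ 2 + (Real.log n / 2 + h - J) * mdm n d) =
        n * (J * mdm n d ^ 2) + (Real.log n / 2 + h - J) * (n * mdm n d) := by ring
    rw [this, e3]
    have hd2 : (d : ℝ) = (n - k) / 2 := by linarith
    rw [hd2]; ring
  rw [key, abs_le]
  constructor <;> linarith

/-- Derivative of the free energy. -/
noncomputable def mdF' (J h m : ℝ) : ℝ :=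
  2 * J * m + (h - J) - Real.log m + Real.log (1 - m) / 2

lemma hasDerivAt_mdF (J h m : ℝ) (h0 : 0 < m) (h1 : m < 1) :
    HasDerivAt (mdF J h) (mdF' J h m) m := by
  unfold mdF
  have d1 : HasDerivAt (fun m => Real.negMulLog m) (-Real.log m - 1) m :=
    Real.hasDerivAt_negMulLog h0.ne'
  have d2 : HasDerivAt (fun m : ℝ => Real.negMulLog (1 - m)) ((-Real.log (1 - m) - 1) * (-1)) m :=
    HasDerivAt.comp m (Real.hasDerivAt_negMulLog (by linarith : (1 : ℝ) - m ≠ 0))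
      ((hasDerivAt_id m).const_sub 1)
  have d3 : HasDerivAt (fun m : ℝ => J * m ^ 2) (J * (2 * m)) m := by
    simpa using (hasDerivAt_pow 2 m).const_mul J
  have d4 : HasDerivAt (fun m : ℝ => (h - J) * m) (h - J) m := by
    simpa using (hasDerivAt_id m).const_mul (h - J)
  have d5 : HasDerivAt (fun m : ℝ => m / 2) (1 / 2) m := (hasDerivAt_id m).div_const 2
  have := ((((d3.add d4).add d1).add (d2.div_const 2)).add d5).sub_const (1 / 2)
  exact this.congr_deriv (by unfold mdF'; ring)

/-- Second derivative of the free energy. -/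
noncomputable def mdF'' (J m : ℝ) : ℝ := 2 * J - 1 / m - 1 / (2 * (1 - m))

lemma hasDerivAt_mdF' (J h m : ℝ) (h0 : 0 < m) (h1 : m < 1) :
    HasDerivAt (mdF' J h) (mdF'' J m) m := by
  unfold mdF'
  have d1 : HasDerivAt (fun m => Real.log m) m⁻¹ m := Real.hasDerivAt_log h0.ne'
  have d2 : HasDerivAt (fun m : ℝ => Real.log (1 - m)) ((1 - m)⁻¹ * (-1)) m :=
    HasDerivAt.comp m (Real.hasDerivAt_log (by linarith : (1 : ℝ) - m ≠ 0))
      ((hasDerivAt_id m).const_sub 1)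
  have d4 : HasDerivAt (fun m : ℝ => 2 * J * m) (2 * J) m := by
    simpa using (hasDerivAt_id m).const_mul (2 * J)
  have := (((d4.add_const (h - J)).sub d1).add (d2.div_const 2))
  refine this.congr_deriv ?_
  unfold mdF''
  have : (1 - m) ≠ 0 := by linarith
  field_simp; ring

lemma log_add_sub_le (m t η : ℝ) (hη : 0 < η) (hm : η ≤ m) (ht : 0 ≤ t) :
    |Real.log (m + t) - Real.log m| ≤ t / η := by
  have hm0 : 0 < m := by linarith
  rw [abs_of_nonneg (by
    have := Real.log_le_log hm0 (by linarith : m ≤ m + t); linarith)]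
  rw [← Real.log_div (by linarith) (by linarith)]
  calc Real.log ((m + t) / m) ≤ (m + t) / m - 1 := Real.log_le_sub_one_of_pos (by positivity)
    _ = t / m := by field_simp; ring
    _ ≤ t / η := by gcongr

lemma mdF'_lip (J h η x y : ℝ) (hJ : 0 ≤ J) (hη : 0 < η) (hx : x ∈ Set.Icc η (1 - η))
    (hy : y ∈ Set.Icc η (1 - η)) : |mdF' J h x - mdF' J h y| ≤ (2 * J + 2 / η) * |x - y| := by
  refine Convex.norm_image_sub_le_of_norm_hasDerivWithin_le (s := Set.Icc η (1 - η))
    (f := mdF' J h) (f' := mdF'' J) ?_ ?_ (convex_Icc _ _) hy hx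
  · intro u hu
    exact (hasDerivAt_mdF' J h u (by linarith [hu.1]) (by linarith [hu.2])).hasDerivWithinAt
  · intro u hu
    have h1 : 1 / u ≤ 1 / η := one_div_le_one_div_of_le hη hu.1
    have h2 : 1 / (2 * (1 - u)) ≤ 1 / η := one_div_le_one_div_of_le hη (by linarith [hu.2])
    have h3 : 0 ≤ 1 / u := by
      have : 0 < u := by linarith [hu.1]
      positivity
    have h4 : 0 ≤ 1 / (2 * (1 - u)) := by
      have : 0 < 1 - u := by linarith [hu.2]
      positivity
    unfold mdF''
    rw [Real.norm_eq_abs, abs_le]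
    have : 2 / η = 1 / η + 1 / η := by ring
    constructor <;> linarith

lemma mdF_taylor1 (J h η x y : ℝ) (hJ : 0 ≤ J) (hη : 0 < η) (hx : x ∈ Set.Icc η (1 - η))
    (hy : y ∈ Set.Icc η (1 - η)) :
    |mdF J h x - mdF J h y - mdF' J h y * (x - y)| ≤ (2 * J + 2 / η) * |x - y| ^ 2 := by
  have := Convex.norm_image_sub_le_of_norm_hasDerivWithin_le (s := Set.uIcc y x)
    (f := fun u => mdF J h u - mdF' J h y * u) (f' := fun u => mdF' J h u - mdF' J h y)
    (x := y) (y := x) (C := (2 * J + 2 / η) * |x - y|) ?_ ?_ (convex_uIcc _ _)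
    Set.left_mem_uIcc Set.right_mem_uIcc
  · simp only [Real.norm_eq_abs] at this
    calc _ = |mdF J h x - mdF' J h y * x - (mdF J h y - mdF' J h y * y)| := by congr 1; ring
      _ ≤ _ := this
      _ = _ := by ring
  · intro u hu
    have hu2 : u ∈ Set.Icc η (1 - η) := Set.uIcc_subset_Icc hy hx hu
    have d := hasDerivAt_mdF J h u (by linarith [hu2.1]) (by linarith [hu2.2])
    have d2 : HasDerivAt (fun u => mdF' J h y * u) (mdF' J h y) u := by
      simpa using (hasDerivAt_id u).const_mul (mdF' J h y)
    exact (d.sub d2).hasDerivWithinAt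
  · intro u hu
    have hu2 : u ∈ Set.Icc η (1 - η) := Set.uIcc_subset_Icc hy hx hu
    refine (mdF'_lip J h η u y hJ hη hu2 hy).trans ?_
    have : |u - y| ≤ |x - y| := Set.abs_sub_left_of_mem_uIcc hu
    gcongr

lemma mdW_incr (J h η : ℝ) (hJ : 0 ≤ J) (hη : 0 < η) :
    ∃ C : ℝ, 0 < C ∧ ∀ n d : ℕ, 1 ≤ n → 2 * (d + 1) ≤ n → mdm n d ∈ Set.Icc η (1 - η) →
      mdm n (d + 1) ∈ Set.Icc η (1 - η) →
      |(Real.log (mdW J h n (d + 1)) - n * mdF J h (mdm n (d + 1))) -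
        (Real.log (mdW J h n d) - n * mdF J h (mdm n d))| ≤ C / n := by
  refine ⟨4 * (2 * J + 2 / η) + 3 / η + 4 * J, by positivity, ?_⟩
  intro n d hn hd h1 h2
  have hn0 : (0 : ℝ) < n := by exact_mod_cast hn
  set m := mdm n (d + 1) with hm
  have hmm : mdm n d = m + 2 / n := by
    rw [hm]; unfold mdm; push_cast; field_simp; ring
  have hm0 : 0 < m := by linarith [h2.1]
  have hm1 : 0 < 1 - m := by linarith [h2.2]
  obtain ⟨k, hk⟩ : ∃ k, n - 2 * (d + 1) = k := ⟨_, rfl⟩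
  have hk2 : n - 2 * d = k + 2 := by omega
  have hnk : (n : ℝ) = k + 2 * (d + 1) := by
    have : n = k + 2 * (d + 1) := by omega
    exact_mod_cast this
  have hkm : (k : ℝ) = n * m := by rw [hm]; unfold mdm; push_cast; field_simp; linarith
  have hdm : 2 * ((d : ℝ) + 1) = n * (1 - m) := by linarith
  -- log ratio
  have hratio : Real.log (mdW J h n d) - Real.log (mdW J h n (d + 1)) =
      Real.log (1 - m) - Real.log (m + 1 / n) - Real.log (m + 2 / n) + 4 * J * m + 4 * J / n
        + 2 * (h - J) := by
    rw [log_mdW, log_mdW, hk, hk2, ← hm, hmm, Nat.factorial_succ d, Nat.factorial_succ (k + 1),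
      Nat.factorial_succ k]
    push_cast
    rw [Real.log_mul (by positivity) (by positivity), Real.log_mul (by positivity) (by positivity),
      Real.log_mul (by positivity) (by positivity)]
    have l1 : Real.log (k + 1 + 1) = Real.log n + Real.log (m + 2 / n) := by
      rw [← Real.log_mul (by positivity) (by positivity)]
      congr 1; rw [hkm]; field_simp; ring
    have l2 : Real.log (k + 1) = Real.log n + Real.log (m + 1 / n) := by
      rw [← Real.log_mul (by positivity) (by positivity)]
      congr 1; rw [hkm]; field_simp
    have l3 : Real.log (d + 1) = Real.log n + Real.log (1 - m) - Real.log 2 := by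
      rw [← Real.log_mul (by positivity) (by positivity), ← hdm,
        Real.log_mul (by positivity) (by positivity)]
      ring
    rw [l1, l2, l3]
    field_simp
    ring
  have t1 := mdF_taylor1 J h η (m + 2 / n) m hJ hη (hmm ▸ h1) h2
  rw [show m + 2 / (n : ℝ) - m = 2 / n by ring, abs_of_pos (by positivity : (0 : ℝ) < 2 / n)] at t1
  have l1 := log_add_sub_le m (1 / n) η hη h2.1 (by positivity)
  have l2 := log_add_sub_le m (2 / n) η hη h2.1 (by positivity)
  rw [hmm]
  have t2 : |n * (mdF J h (m + 2 / n) - mdF J h m) - 2 * mdF' J h m| ≤ 4 * (2 * J + 2 / η) / n := by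
    have : n * (mdF J h (m + 2 / n) - mdF J h m) - 2 * mdF' J h m =
        n * (mdF J h (m + 2 / n) - mdF J h m - mdF' J h m * (2 / n)) := by field_simp
    rw [this, abs_mul, abs_of_pos hn0]
    calc _ ≤ n * ((2 * J + 2 / η) * (2 / n) ^ 2) := by gcongr
      _ = _ := by field_simp; ring
  have : (Real.log (mdW J h n (d + 1)) - n * mdF J h m) -
        (Real.log (mdW J h n d) - n * mdF J h (m + 2 / n)) =
      (n * (mdF J h (m + 2 / n) - mdF J h m) - 2 * mdF' J h m) +
      ((Real.log (m + 1 / n) - Real.log m) + (Real.log (m + 2 / n) - Real.log m)) - 4 * J / n := by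
    have : Real.log (mdW J h n (d + 1)) = Real.log (mdW J h n d) - (Real.log (1 - m) - Real.log (m + 1 / n) - Real.log (m + 2 / n) + 4 * J * m + 4 * J / n
        + 2 * (h - J)) := by linarith
    rw [this]; unfold mdF'; ring
  rw [this]
  have e : (4 * (2 * J + 2 / η) + 3 / η + 4 * J) / n = 4 * (2 * J + 2 / η) / n + (1 / n / η + 2 / n / η) + 4 * J / n := by
    field_simp; ring
  rw [e]
  refine (abs_sub _ _).trans ?_
  rw [abs_of_nonneg (by positivity : 0 ≤ 4 * J / n)]
  have := abs_add_le (n * (mdF J h (m + 2 / n) - mdF J h m) - 2 * mdF' J h m) ((Real.log (m + 1 / n) - Real.log m) + (Real.log (m + 2 / n) - Real.log m))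
  have := abs_add_le (Real.log (m + 1 / n) - Real.log m) (Real.log (m + 2 / n) - Real.log m)
  linarith


lemma mdg_facts (x : ℝ) : 0 < mdg x ∧ mdg x < 1 ∧
    mdg x ^ 2 = Real.exp (2 * x) * (1 - mdg x) ∧
    Real.sqrt (Real.exp (4 * x) + 4 * Real.exp (2 * x)) = 2 * mdg x + Real.exp (2 * x) := by
  have hE : 0 < Real.exp (2 * x) := Real.exp_pos _
  have hE2 : Real.exp (4 * x) = Real.exp (2 * x) ^ 2 := by
    rw [← Real.exp_nat_mul]; congr 1; push_cast; ring
  set E := Real.exp (2 * x) with hEdef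
  set R := Real.sqrt (Real.exp (4 * x) + 4 * E) with hR
  have hR2 : R ^ 2 = E ^ 2 + 4 * E := by
    rw [hR, Real.sq_sqrt (by positivity), hE2]
  have hR0 : 0 ≤ R := Real.sqrt_nonneg _
  have hg : mdg x = (R - E) / 2 := rfl
  have h1 : E < R := by nlinarith
  have h2 : R < E + 2 := by nlinarith
  rw [hg]
  refine ⟨by linarith, by linarith, ?_, by ring⟩
  nlinarith

lemma mdg_log (x : ℝ) : x = Real.log (mdg x) - Real.log (1 - mdg x) / 2 := by
  obtain ⟨h0, h1, h2, _⟩ := mdg_facts x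
  have := congrArg Real.log h2
  rw [Real.log_pow, Real.log_mul (by positivity) (by linarith), Real.log_exp] at this
  push_cast at this
  linarith

/-- `g' = φ(g)`. -/
noncomputable def mdphi (u : ℝ) : ℝ := 2 * u * (1 - u) / (2 - u)

lemma hasDerivAt_mdg (x : ℝ) : HasDerivAt mdg (mdphi (mdg x)) x := by
  obtain ⟨h0, h1, h2, h3⟩ := mdg_facts x
  have hE : 0 < Real.exp (2 * x) := Real.exp_pos _
  have hE2 : Real.exp (4 * x) = Real.exp (2 * x) ^ 2 := by
    rw [← Real.exp_nat_mul]; congr 1; push_cast; ring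
  have d2 : HasDerivAt (fun x : ℝ => Real.exp (2 * x)) (Real.exp (2 * x) * 2) x := by
    have : HasDerivAt (fun x : ℝ => 2 * x) 2 x := by simpa using (hasDerivAt_id x).const_mul (2 : ℝ)
    exact this.exp
  have d4 : HasDerivAt (fun x : ℝ => Real.exp (4 * x)) (Real.exp (4 * x) * 4) x := by
    have : HasDerivAt (fun x : ℝ => 4 * x) 4 x := by simpa using (hasDerivAt_id x).const_mul (4 : ℝ)
    exact this.exp
  have d5 := (d4.add (d2.const_mul 4)).sqrt (by
    simp only [Pi.add_apply]; positivity)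
  have d6 := (d5.sub d2).div_const 2
  refine HasDerivAt.congr_deriv (f := mdg) d6 ?_
  simp only [Pi.add_apply]
  rw [h3, hE2]
  have hE3 : Real.exp (2 * x) = mdg x ^ 2 / (1 - mdg x) := by
    rw [h2]; field_simp [show (1 - mdg x) ≠ 0 by linarith]
  have h5 : 1 - mdg x ≠ 0 := by linarith
  have h6 : 2 - mdg x ≠ 0 := by linarith
  unfold mdphi
  have h7 : 2 * (2 * mdg x + Real.exp (2 * x)) = 2 * (mdg x * (2 - mdg x) / (1 - mdg x)) := by
    rw [hE3]; field_simp; ring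
  rw [h7, hE3]
  field_simp
  ring

lemma hasDerivAt_mdtau (J h x : ℝ) : HasDerivAt (mdtau J h) (2 * J) x := by
  have : HasDerivAt (fun x : ℝ => (2 * x - 1) * J + h) (2 * 1 * J) x :=
    (((((hasDerivAt_id x).const_mul (2 : ℝ)).sub_const 1)).mul_const J).add_const h
  exact this.congr_deriv (by ring)

lemma hasDerivAt_mdgtau (J h x : ℝ) :
    HasDerivAt (fun x => mdg (mdtau J h x)) (mdphi (mdg (mdtau J h x)) * (2 * J)) x :=
  (hasDerivAt_mdg _).comp x (hasDerivAt_mdtau J h x)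

lemma hasDerivAt_mdH (J h x : ℝ) :
    HasDerivAt (mdH J h) (2 * J * (mdg (mdtau J h x) - x)) x := by
  obtain ⟨h0, h1, h2, h3⟩ := mdg_facts (mdtau J h x)
  have d1 := hasDerivAt_mdgtau J h x
  have d2 := d1.const_sub 1
  have d3 := d2.log (by linarith)
  have d4 : HasDerivAt (fun x : ℝ => -J * x ^ 2) (-J * (2 * x)) x := by
    simpa using (hasDerivAt_pow 2 x).const_mul (-J)
  refine HasDerivAt.congr_deriv (f := mdH J h) (d4.sub ((d2.add d3).div_const 2)) ?_
  have h5 : 1 - mdg (mdtau J h x) ≠ 0 := by linarith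
  have h6 : 2 - mdg (mdtau J h x) ≠ 0 := by linarith
  unfold mdphi
  field_simp
  ring

lemma mdH_deriv1 (J h : ℝ) : deriv (mdH J h) = fun x => 2 * J * (mdg (mdtau J h x) - x) :=
  funext fun x => (hasDerivAt_mdH J h x).deriv

lemma mdH_deriv2 (J h : ℝ) : iteratedDeriv 2 (mdH J h) =
    fun x => 2 * J * (mdphi (mdg (mdtau J h x)) * (2 * J) - 1) := by
  rw [iteratedDeriv_succ, iteratedDeriv_one, mdH_deriv1]
  exact funext fun x =>
    (((hasDerivAt_mdgtau J h x).sub (hasDerivAt_id x)).const_mul (2 * J)).deriv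

/-- Derivative of `φ`. -/
noncomputable def mdphi1 (u : ℝ) : ℝ := (2 * u ^ 2 - 8 * u + 4) / (2 - u) ^ 2

lemma hasDerivAt_mdphi (u : ℝ) (hu : u < 2) : HasDerivAt mdphi (mdphi1 u) u := by
  have d1 : HasDerivAt (fun u : ℝ => 2 * u) 2 u := by
    simpa using (hasDerivAt_id u).const_mul (2 : ℝ)
  have d2 : HasDerivAt (fun u : ℝ => 1 - u) (-1) u := (hasDerivAt_id u).const_sub 1
  have d3 : HasDerivAt (fun u : ℝ => 2 - u) (-1) u := (hasDerivAt_id u).const_sub 2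
  have h6 : 2 - u ≠ 0 := by linarith
  refine HasDerivAt.congr_deriv (f := mdphi) ((d1.mul d2).div d3 h6) ?_
  unfold mdphi1
  simp only [Pi.mul_apply]
  field_simp
  ring

/-- Second derivative of `φ`. -/
noncomputable def mdphi2 (u : ℝ) : ℝ := - 8 / (2 - u) ^ 3

lemma hasDerivAt_mdphi1 (u : ℝ) (hu : u < 2) : HasDerivAt mdphi1 (mdphi2 u) u := by
  have d0 : HasDerivAt (fun u : ℝ => 2 * u ^ 2) (2 * (2 * u)) u := by
    simpa using (hasDerivAt_pow 2 u).const_mul (2 : ℝ)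
  have d1 : HasDerivAt (fun u : ℝ => 8 * u) 8 u := by
    simpa using (hasDerivAt_id u).const_mul (8 : ℝ)
  have d3 : HasDerivAt (fun u : ℝ => 2 - u) (-1) u := (hasDerivAt_id u).const_sub 2
  have h6 : 2 - u ≠ 0 := by linarith
  refine HasDerivAt.congr_deriv (f := mdphi1) (((d0.sub d1).add_const 4).div (d3.pow 2) (by
    positivity)) ?_
  unfold mdphi2
  simp only [Pi.sub_apply]
  field_simp
  ring

lemma mdH_deriv3 (J h : ℝ) : iteratedDeriv 3 (mdH J h) =
    fun x => (2 * J) ^ 3 * (mdphi1 (mdg (mdtau J h x)) * mdphi (mdg (mdtau J h x))) := by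
  rw [iteratedDeriv_succ, mdH_deriv2]
  refine funext fun x => ?_
  obtain ⟨h0, h1, h2, h3⟩ := mdg_facts (mdtau J h x)
  have d := (hasDerivAt_mdphi (mdg (mdtau J h x)) (by linarith)).comp x (hasDerivAt_mdgtau J h x)
  have d2 := (((d.mul_const (2 * J)).sub_const 1).const_mul (2 * J)).deriv
  refine Eq.trans d2 ?_
  ring

lemma mdH_deriv4 (J h x : ℝ) : iteratedDeriv 4 (mdH J h) x =
    (2 * J) ^ 4 * ((mdphi2 (mdg (mdtau J h x)) * mdphi (mdg (mdtau J h x)) +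
      mdphi1 (mdg (mdtau J h x)) ^ 2) * mdphi (mdg (mdtau J h x))) := by
  rw [iteratedDeriv_succ, mdH_deriv3]
  obtain ⟨h0, h1, h2, h3⟩ := mdg_facts (mdtau J h x)
  have d := (hasDerivAt_mdphi (mdg (mdtau J h x)) (by linarith)).comp x (hasDerivAt_mdgtau J h x)
  have e := (hasDerivAt_mdphi1 (mdg (mdtau J h x)) (by linarith)).comp x (hasDerivAt_mdgtau J h x)
  have d2 := ((e.mul d).const_mul ((2 * J) ^ 3)).deriv
  refine Eq.trans d2 ?_
  simp only [Function.comp]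
  ring

lemma mul_log_ge (x u : ℝ) (hx : 0 ≤ x) (hu : 0 < u) :
    x - u ≤ x * (Real.log x - Real.log u) := by
  rcases hx.eq_or_lt with h0 | hx
  · subst h0; simp; linarith
  · have h1 : Real.log (u / x) ≤ u / x - 1 := Real.log_le_sub_one_of_pos (by positivity)
    rw [Real.log_div (by positivity) (by positivity)] at h1
    have : x * (Real.log u - Real.log x) ≤ x * (u / x - 1) := by gcongr
    have e : x * (u / x - 1) = u - x := by field_simp
    linarith

lemma mdH_sub_mdF (J h x : ℝ) : mdH J h x - mdF J h x =
    x * (Real.log x - Real.log (mdg (mdtau J h x))) +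
    (1 - x) * (Real.log (1 - x) - Real.log (1 - mdg (mdtau J h x))) / 2
      + (mdg (mdtau J h x) - x) / 2 := by
  have h1 := mdg_log (mdtau J h x)
  unfold mdH mdF Real.negMulLog
  set u := mdg (mdtau J h x)
  have h2 : x * mdtau J h x = x * (Real.log u - Real.log (1 - u) / 2) := by rw [← h1]
  have h3 : x * mdtau J h x = 2 * J * x ^ 2 - J * x + h * x := by unfold mdtau; ring
  linarith

lemma mdF_le_mdH (J h x : ℝ) (h0 : 0 ≤ x) (h1 : x ≤ 1) : mdF J h x ≤ mdH J h x := by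
  obtain ⟨g0, g1, _, _⟩ := mdg_facts (mdtau J h x)
  have e := mdH_sub_mdF J h x
  have a := mul_log_ge x (mdg (mdtau J h x)) h0 g0
  have b := mul_log_ge (1 - x) (1 - mdg (mdtau J h x)) (by linarith) (by linarith)
  linarith

lemma mdF_eq_mdH (J h x : ℝ) (hx : x = mdg (mdtau J h x)) : mdF J h x = mdH J h x := by
  have e := mdH_sub_mdF J h x
  rw [← hx] at e
  linarith

lemma mdF'_zero (J h x : ℝ) (hx : x = mdg (mdtau J h x)) : mdF' J h x = 0 := by
  have h1 := mdg_log (mdtau J h x)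
  rw [← hx] at h1
  unfold mdF'; unfold mdtau at h1; linarith

lemma continuous_mdF (J h : ℝ) : Continuous (mdF J h) := by
  unfold mdF
  have := Real.continuous_negMulLog
  fun_prop

lemma mdF_gap (J h m₀ : ℝ) (hmax : ∀ x ∈ Set.Icc (0 : ℝ) 1, x ≠ m₀ → mdF J h x < mdF J h m₀)
    (η : ℝ) (hη : 0 < η) :
    ∃ c : ℝ, 0 < c ∧ ∀ x ∈ Set.Icc (0 : ℝ) 1, η ≤ |x - m₀| → mdF J h x ≤ mdF J h m₀ - c := by
  set S : Set ℝ := Set.Icc (0 : ℝ) 1 ∩ {x | η ≤ |x - m₀|} with hS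
  have hcl : IsClosed {x : ℝ | η ≤ |x - m₀|} := isClosed_le continuous_const (by fun_prop)
  have hc : IsCompact S := isCompact_Icc.inter_right hcl
  rcases S.eq_empty_or_nonempty with he | hne
  · refine ⟨1, one_pos, fun x hx hx2 => ?_⟩
    have : x ∈ S := ⟨hx, hx2⟩
    rw [he] at this; exact absurd this (Set.notMem_empty x)
  · obtain ⟨y, hy, hmaxy⟩ := hc.exists_isMaxOn hne (continuous_mdF J h).continuousOn
    have hy2 : y ≠ m₀ := by
      intro hh
      have := hy.2
      simp only [Set.mem_ofPred_eq, hh, sub_self, abs_zero] at this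
      linarith
    refine ⟨mdF J h m₀ - mdF J h y, by linarith [hmax y hy.1 hy2], fun x hx hx2 => ?_⟩
    have : mdF J h x ≤ mdF J h y := hmaxy (a := x) ⟨hx, hx2⟩
    linarith

lemma mvt_pow (G G' : ℝ → ℝ) (m₀ δ C : ℝ) (p : ℕ) (hC : 0 ≤ C)
    (hd : ∀ x, |x - m₀| ≤ δ → HasDerivAt G (G' x) x) (h0 : G m₀ = 0)
    (hb : ∀ x, |x - m₀| ≤ δ → |G' x| ≤ C * |x - m₀| ^ p) :
    ∀ x, |x - m₀| ≤ δ → |G x| ≤ C * |x - m₀| ^ (p + 1) := by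
  intro x hx
  have hsub : ∀ u ∈ Set.uIcc m₀ x, |u - m₀| ≤ |x - m₀| :=
    fun u hu => Set.abs_sub_left_of_mem_uIcc hu
  have := Convex.norm_image_sub_le_of_norm_hasDerivWithin_le (s := Set.uIcc m₀ x)
    (f := G) (f' := G') (x := m₀) (y := x) (C := C * |x - m₀| ^ p) ?_ ?_ (convex_uIcc _ _)
    Set.left_mem_uIcc Set.right_mem_uIcc
  · rw [h0, sub_zero] at this
    simp only [Real.norm_eq_abs] at this
    rw [pow_succ, ← mul_assoc]; exact this
  · intro u hu
    exact (hd u ((hsub u hu).trans hx)).hasDerivWithinAt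
  · intro u hu
    refine (hb u ((hsub u hu).trans hx)).trans ?_
    have := hsub u hu
    gcongr

lemma mdF_taylor (J h m₀ δ C κ : ℝ) (b : ℕ) (hC : 0 ≤ C) (hδ0 : δ < m₀) (hδ1 : m₀ + δ < 1)
    (h1 : mdF' J h m₀ = 0)
    (hb : ∀ x, |x - m₀| ≤ δ →
      |mdF'' J x + κ * ((b + 2) * ((b + 1) * (x - m₀) ^ b))| ≤ C * |x - m₀| ^ (b + 1)) :
    ∀ x, |x - m₀| ≤ δ →
      |mdF J h x - mdF J h m₀ + κ * (x - m₀) ^ (b + 2)| ≤ C * |x - m₀| ^ (b + 2 + 1) := by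
  have hin : ∀ x, |x - m₀| ≤ δ → 0 < x ∧ x < 1 := by
    intro x hx
    rw [abs_le] at hx
    constructor <;> linarith
  have s1 := mvt_pow (fun x => mdF' J h x + κ * ((b + 2) * (x - m₀) ^ (b + 1)))
    (fun x => mdF'' J x + κ * ((b + 2) * ((b + 1) * (x - m₀) ^ b))) m₀ δ C (b + 1) hC ?_ ?_ hb
  · refine mvt_pow (fun x => mdF J h x - mdF J h m₀ + κ * (x - m₀) ^ (b + 2))
      (fun x => mdF' J h x + κ * ((b + 2) * (x - m₀) ^ (b + 1))) m₀ δ C (b + 1 + 1) hC ?_ ?_ s1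
    · intro x hx
      obtain ⟨a1, a2⟩ := hin x hx
      have d := (((hasDerivAt_id x).sub_const m₀).pow (b + 2)).const_mul κ
      refine (((hasDerivAt_mdF J h x a1 a2).sub_const (mdF J h m₀)).add d).congr_deriv ?_
      simp
    · simp
  · intro x hx
    obtain ⟨a1, a2⟩ := hin x hx
    have d := ((((hasDerivAt_id x).sub_const m₀).pow (b + 1)).const_mul ((b : ℝ) + 2)).const_mul κ
    refine ((hasDerivAt_mdF' J h x a1 a2).add d).congr_deriv ?_
    simp
  · simp [h1]


/-- The analytic input needed for Laplace's method at order `a`. -/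
def LapHyp (J h m₀ κ : ℝ) (a : ℕ) : Prop :=
  0 ≤ J ∧ 0 < κ ∧ 0 < m₀ ∧ m₀ < 1 ∧
  (∃ δ C : ℝ, 0 < δ ∧ 0 < C ∧ δ < m₀ ∧ m₀ + δ < 1 ∧ ∀ x, |x - m₀| ≤ δ →
      |mdF J h x - mdF J h m₀ + κ * (x - m₀) ^ a| ≤ C * |x - m₀| ^ (a + 1)) ∧
  (∀ x ∈ Set.Icc (0 : ℝ) 1, x ≠ m₀ → mdF J h x < mdF J h m₀)

lemma window_exists (m₀ : ℝ) (h0 : 0 < m₀) (h1 : m₀ < 1) :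
    ∃ η : ℝ, 0 < η ∧ η < m₀ ∧ m₀ + η < 1 ∧ ∀ x, |x - m₀| ≤ η → η ≤ x ∧ η ≤ 1 - x := by
  refine ⟨min m₀ (1 - m₀) / 2, ?_, ?_, ?_, ?_⟩
  · have : 0 < min m₀ (1 - m₀) := lt_min h0 (by linarith)
    linarith
  · have := min_le_left m₀ (1 - m₀)
    linarith
  · have := min_le_right m₀ (1 - m₀)
    linarith
  · intro x hx
    rw [abs_le] at hx
    have a := min_le_right m₀ (1 - m₀)
    have b := min_le_left m₀ (1 - m₀)
    constructor <;> linarith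

lemma lapHyp_one (J h m₀ : ℝ) (hJ : 0 ≤ J)
    (hmax : ∀ x : ℝ, x ≠ m₀ → mdH J h x < mdH J h m₀)
    (hfix : m₀ = mdg (mdtau J h m₀)) (h2 : iteratedDeriv 2 (mdH J h) m₀ < 0) :
    0 < -(iteratedDeriv 2 (mdH J h) m₀)⁻¹ - (2 * J)⁻¹ ∧
    LapHyp J h m₀ (1 / (2 * (-(iteratedDeriv 2 (mdH J h) m₀)⁻¹ - (2 * J)⁻¹))) 2 := by
  obtain ⟨g0, g1, _, _⟩ := mdg_facts (mdtau J h m₀)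
  rw [← hfix] at g0 g1
  have hJ0 : 0 < J := by
    rcases hJ.eq_or_lt with h0 | h0
    · subst h0
      rw [mdH_deriv2] at h2
      simp at h2
    · exact h0
  have e2 : iteratedDeriv 2 (mdH J h) m₀ = 2 * J * (mdphi m₀ * (2 * J) - 1) := by
    rw [mdH_deriv2]; simp only; rw [← hfix]
  rw [e2] at h2 ⊢
  have hphi : 0 < mdphi m₀ := by
    unfold mdphi
    have : 0 < 1 - m₀ := by linarith
    have : 0 < 2 - m₀ := by linarith
    positivity
  have hlt : 0 < 1 - mdphi m₀ * (2 * J) := by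
    by_contra hcon
    have : 0 ≤ 2 * J * (mdphi m₀ * (2 * J) - 1) := mul_nonneg (by positivity) (by linarith)
    linarith
  have hlam : -(2 * J * (mdphi m₀ * (2 * J) - 1))⁻¹ - (2 * J)⁻¹ =
      mdphi m₀ / (1 - mdphi m₀ * (2 * J)) := by
    have : mdphi m₀ * (2 * J) - 1 ≠ 0 := by linarith
    have e : mdphi m₀ * (2 * J) - 1 = - (1 - mdphi m₀ * (2 * J)) := by ring
    rw [e]
    set w := 1 - mdphi m₀ * (2 * J) with hw
    have : mdphi m₀ = (1 - w) / (2 * J) := by rw [hw]; field_simp; ring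
    rw [this]
    field_simp
  rw [hlam]
  refine ⟨by positivity, hJ, by positivity, g0, g1, ?_, ?_⟩
  · obtain ⟨η, hη, hη0, hη1, hηx⟩ := window_exists m₀ g0 g1
    refine ⟨η, 2 / η ^ 2, hη, by positivity, hη0, hη1, ?_⟩
    have hF'' : 1 / (2 * (mdphi m₀ / (1 - mdphi m₀ * (2 * J)))) = - mdF'' J m₀ / 2 := by
      unfold mdF''
      have : 1 - m₀ ≠ 0 := by linarith
      have : 2 - m₀ ≠ 0 := by linarith
      have e : 1 / (2 * (mdphi m₀ / (1 - mdphi m₀ * (2 * J)))) = (1 / mdphi m₀ - 2 * J) / 2 := by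
        field_simp
      rw [e]
      have : 1 / mdphi m₀ = 1 / m₀ + 1 / (2 * (1 - m₀)) := by
        unfold mdphi; field_simp; ring
      rw [this]; ring
    rw [hF'']
    refine mdF_taylor J h m₀ η (2 / η ^ 2) (- mdF'' J m₀ / 2) 0 (by positivity) hη0 hη1
      (mdF'_zero J h m₀ hfix) ?_
    intro x hx
    obtain ⟨x0, x1⟩ := hηx x hx
    obtain ⟨y0, y1⟩ := hηx m₀ (by simp; exact hη.le)
    have hx0 : 0 < x := by linarith
    have hx1 : 0 < 1 - x := by linarith
    have hy1 : 0 < 1 - m₀ := by linarith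
    have e : mdF'' J x + -mdF'' J m₀ / 2 * (((0 : ℕ) + 2) * (((0 : ℕ) + 1) * (x - m₀) ^ 0)) =
        (x - m₀) * (1 / (x * m₀)) - (x - m₀) * (1 / (2 * (1 - x) * (1 - m₀))) := by
      unfold mdF''; push_cast; field_simp; ring
    rw [e, ← mul_sub, abs_mul, pow_one, mul_comm]
    have a1 : 1 / (x * m₀) ≤ 1 / η ^ 2 := by
      apply one_div_le_one_div_of_le (by positivity); nlinarith
    have a2 : 1 / (2 * (1 - x) * (1 - m₀)) ≤ 1 / η ^ 2 := by
      apply one_div_le_one_div_of_le (by positivity); nlinarith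
    have a3 : 0 ≤ 1 / (x * m₀) := by positivity
    have a4 : 0 ≤ 1 / (2 * (1 - x) * (1 - m₀)) := by positivity
    have a5 : 2 / η ^ 2 = 1 / η ^ 2 + 1 / η ^ 2 := by ring
    gcongr
    rw [abs_le]; constructor <;> linarith
  · intro x hx hne
    rw [mdF_eq_mdH J h m₀ hfix]
    exact (mdF_le_mdH J h x hx.1 hx.2).trans_lt (hmax x hne)

lemma Jc_eq : Jc = (3 + 2 * Real.sqrt 2) / 4 := by
  have h := Real.sq_sqrt (show (0 : ℝ) ≤ 2 by norm_num)
  have h1 : Real.sqrt 2 < 1.5 := by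
    rw [Real.sqrt_lt' (by norm_num)]; norm_num
  unfold Jc
  have : 3 - 2 * Real.sqrt 2 ≠ 0 := by linarith
  rw [div_eq_div_iff (by positivity) (by norm_num)]
  nlinarith

lemma crit_fix : (2 - Real.sqrt 2) = mdg (mdtau Jc hcrit (2 - Real.sqrt 2)) := by
  have h := Real.sq_sqrt (show (0 : ℝ) ≤ 2 by norm_num)
  have h1 : Real.sqrt 2 < 1.5 := by
    rw [Real.sqrt_lt' (by norm_num)]; norm_num
  have h2 : 1.4 < Real.sqrt 2 := by
    rw [Real.lt_sqrt (by norm_num)]; norm_num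
  have htau : mdtau Jc hcrit (2 - Real.sqrt 2) = Real.log (2 * Real.sqrt 2 - 2) / 2 := by
    unfold mdtau hcrit
    rw [Jc_eq]
    nlinarith
  have hexp : Real.exp (2 * mdtau Jc hcrit (2 - Real.sqrt 2)) = 2 * Real.sqrt 2 - 2 := by
    rw [htau, mul_div_cancel₀ _ (by norm_num), Real.exp_log (by linarith)]
  obtain ⟨g0, g1, g2, _⟩ := mdg_facts (mdtau Jc hcrit (2 - Real.sqrt 2))
  rw [hexp] at g2
  set u := mdg (mdtau Jc hcrit (2 - Real.sqrt 2))
  set s := Real.sqrt 2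
  have : (u - (2 - s)) * (u + s) = 0 := by nlinarith
  rcases mul_eq_zero.mp this with h3 | h3
  · linarith
  · linarith

lemma crit_F'' (x : ℝ) (h0 : 0 < x) (h1 : x < 1) :
    mdF'' Jc x = - (2 * Jc * (x - (2 - Real.sqrt 2)) ^ 2 / (x * (1 - x))) := by
  have h := Real.sq_sqrt (show (0 : ℝ) ≤ 2 by norm_num)
  unfold mdF''
  rw [Jc_eq]
  set s := Real.sqrt 2
  have : 1 - x ≠ 0 := by linarith
  field_simp
  have h3 : s ^ 3 = 2 * s := by rw [pow_succ, h]
  ring_nf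
  rw [h3, h]
  ring

lemma lapHyp_two : LapHyp Jc hcrit (2 - Real.sqrt 2)
    (-(iteratedDeriv 4 (mdH Jc hcrit) (2 - Real.sqrt 2)) / 24) 4 := by
  have h := Real.sq_sqrt (show (0 : ℝ) ≤ 2 by norm_num)
  have h1 : Real.sqrt 2 < 1.5 := by
    rw [Real.sqrt_lt' (by norm_num)]; norm_num
  have h2 : 1.4 < Real.sqrt 2 := by
    rw [Real.lt_sqrt (by norm_num)]; norm_num
  have hfix := crit_fix
  have hJ : 0 < Jc := by rw [Jc_eq]; positivity
  set m := 2 - Real.sqrt 2 with hm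
  have m0 : 0 < m := by linarith
  have m1 : m < 1 := by linarith
  have hκ : -(iteratedDeriv 4 (mdH Jc hcrit) m) / 24 = 2 * Jc / (m * (1 - m)) / 12 := by
    rw [mdH_deriv4, ← hfix]
    have p1 : mdphi1 m = 0 := by
      unfold mdphi1
      have : 2 * m ^ 2 - 8 * m + 4 = 0 := by rw [hm]; nlinarith
      rw [this]; simp
    have p0 : 2 * Jc * mdphi m = 1 := by
      unfold mdphi
      have : 2 - m ≠ 0 := by linarith
      rw [Jc_eq, hm]
      set s := Real.sqrt 2
      have : 2 - (2 - s) ≠ 0 := by linarith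
      field_simp
      have h3 : s ^ 3 = 2 * s := by rw [pow_succ, h]
      ring_nf
      rw [h3, h]
      ring
    rw [p1]
    have : (2 * Jc) ^ 4 * ((mdphi2 m * mdphi m + 0 ^ 2) * mdphi m) =
      (2 * Jc * mdphi m) ^ 2 * (2 * Jc) ^ 2 * mdphi2 m := by ring
    rw [this, p0]
    unfold mdphi2
    have e1 : 2 - m ≠ 0 := by linarith
    have e2 : 1 - m ≠ 0 := by linarith
    have : 2 * Jc * (m * (1 - m)) * 8 / (2 - m) ^ 3 = 2 := by
      rw [Jc_eq, hm]
      set s := Real.sqrt 2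
      have : 2 - (2 - s) = s := by ring
      rw [this]
      have : s ≠ 0 := by linarith
      field_simp
      have h3 : s ^ 3 = 2 * s := by rw [pow_succ, h]
      ring_nf
      rw [h3, h]
      ring
    have e3 : 8 / (2 - m) ^ 3 = 2 / (2 * Jc * (m * (1 - m))) := by
      have hne : 2 * Jc * (m * (1 - m)) ≠ 0 := by
        have := mul_ne_zero m0.ne' e2
        positivity
      rw [eq_div_iff hne]; refine Eq.trans ?_ this; ring
    rw [show (-8 : ℝ) / (2 - m) ^ 3 = -(8 / (2 - m) ^ 3) by ring, e3]
    field_simp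
    ring
  rw [hκ]
  have hw : 0 < 1 - m := by linarith
  have hF'0 : mdF' Jc hcrit m = 0 := mdF'_zero Jc hcrit m hfix
  have hneg : ∀ x, 0 < x → x < 1 → x ≠ m → mdF'' Jc x < 0 := by
    intro x a b c
    rw [crit_F'' x a b, ← hm]
    have : 0 < (x - m) ^ 2 := by
      have := sub_ne_zero.mpr c
      positivity
    have : 0 < 1 - x := by linarith
    have : 0 < 2 * Jc * (x - m) ^ 2 / (x * (1 - x)) := by positivity
    linarith
  refine ⟨hJ.le, by positivity, m0, m1, ?_, ?_⟩
  · obtain ⟨η, hη, hη0, hη1, hηx⟩ := window_exists m m0 m1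
    refine ⟨η, 2 * Jc / η ^ 4, hη, by positivity, hη0, hη1, ?_⟩
    refine mdF_taylor Jc hcrit m η (2 * Jc / η ^ 4) _ 2 (by positivity) hη0 hη1 hF'0 ?_
    intro x hx
    obtain ⟨x0, x1⟩ := hηx x hx
    obtain ⟨y0, y1⟩ := hηx m (by simp; exact hη.le)
    have hx0 : 0 < x := by linarith
    have hx1 : 0 < 1 - x := by linarith
    rw [crit_F'' x hx0 (by linarith), ← hm]
    have e : -(2 * Jc * (x - m) ^ 2 / (x * (1 - x))) +
        2 * Jc / (m * (1 - m)) / 12 * (((2 : ℕ) + 2) * (((2 : ℕ) + 1) * (x - m) ^ 2)) =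
        (x - m) ^ 3 * (1 - x - m) * (2 * Jc / ((x * (1 - x)) * (m * (1 - m)))) := by
      push_cast; field_simp; ring
    rw [e, abs_mul, abs_mul, abs_pow, mul_comm (2 * Jc / η ^ 4)]
    have a1 : |1 - x - m| ≤ 1 := by rw [abs_le]; constructor <;> linarith
    have q1 : η ^ 2 ≤ x * (1 - x) := by nlinarith
    have q2 : η ^ 2 ≤ m * (1 - m) := by nlinarith
    have q3 : η ^ 4 ≤ (x * (1 - x)) * (m * (1 - m)) := by
      calc η ^ 4 = η ^ 2 * η ^ 2 := by ring
        _ ≤ _ := by gcongr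
    rw [abs_of_nonneg (a := 2 * Jc / _) (by positivity)]
    calc |x - m| ^ 3 * |1 - x - m| * (2 * Jc / ((x * (1 - x)) * (m * (1 - m))))
        ≤ |x - m| ^ 3 * 1 * (2 * Jc / η ^ 4) := by gcongr
      _ = _ := by ring
  · have hl : StrictMonoOn (mdF Jc hcrit) (Set.Icc 0 m) := by
      apply strictMonoOn_of_deriv_pos (convex_Icc _ _) (continuous_mdF _ _).continuousOn
      intro x hx
      rw [interior_Icc] at hx
      rw [(hasDerivAt_mdF Jc hcrit x hx.1 (hx.2.trans m1)).deriv]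
      have : StrictAntiOn (mdF' Jc hcrit) (Set.Icc x m) := by
        apply strictAntiOn_of_deriv_neg (convex_Icc _ _)
        · intro y hy
          exact (hasDerivAt_mdF' Jc hcrit y (hx.1.trans_le hy.1)
            (hy.2.trans_lt m1)).continuousAt.continuousWithinAt
        · intro y hy
          rw [interior_Icc] at hy
          rw [(hasDerivAt_mdF' Jc hcrit y (hx.1.trans hy.1) (hy.2.trans m1)).deriv]
          exact hneg y (hx.1.trans hy.1) (hy.2.trans m1) hy.2.ne
      have := this ⟨le_refl x, hx.2.le⟩ ⟨hx.2.le, le_refl m⟩ hx.2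
      rw [hF'0] at this; exact this
    have hr : StrictAntiOn (mdF Jc hcrit) (Set.Icc m 1) := by
      apply strictAntiOn_of_deriv_neg (convex_Icc _ _) (continuous_mdF _ _).continuousOn
      intro x hx
      rw [interior_Icc] at hx
      rw [(hasDerivAt_mdF Jc hcrit x (m0.trans hx.1) hx.2).deriv]
      have : StrictAntiOn (mdF' Jc hcrit) (Set.Icc m x) := by
        apply strictAntiOn_of_deriv_neg (convex_Icc _ _)
        · intro y hy
          exact (hasDerivAt_mdF' Jc hcrit y (m0.trans_le hy.1)
            (hy.2.trans_lt hx.2)).continuousAt.continuousWithinAt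
        · intro y hy
          rw [interior_Icc] at hy
          rw [(hasDerivAt_mdF' Jc hcrit y (m0.trans hy.1) (hy.2.trans hx.2)).deriv]
          exact hneg y (m0.trans hy.1) (hy.2.trans hx.2) hy.1.ne'
      have := this ⟨le_refl m, hx.1.le⟩ ⟨hx.1.le, le_refl x⟩ hx.1
      rw [hF'0] at this; exact this
    intro x hx hne
    rcases lt_or_gt_of_ne hne with hlt | hgt
    · exact hl ⟨hx.1, hlt.le⟩ ⟨m0.le, le_refl m⟩ hlt
    · exact hr ⟨le_refl m, m1.le⟩ ⟨hgt.le, hx.2⟩ hgt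


/-- The limiting (unnormalized) density. -/
noncomputable def lf (κ : ℝ) (a : ℕ) (y : ℝ) : ℝ := Real.exp (-(κ * y ^ a))

lemma lf_pos (κ : ℝ) (a : ℕ) (y : ℝ) : 0 < lf κ a y := Real.exp_pos _

lemma continuous_lf (κ : ℝ) (a : ℕ) : Continuous (lf κ a) := by unfold lf; fun_prop

lemma lf_even (κ : ℝ) (a : ℕ) (ha : Even a) (y : ℝ) : lf κ a (-y) = lf κ a y := by
  unfold lf; rw [ha.neg_pow]

lemma lf_le_one (κ : ℝ) (a : ℕ) (ha : Even a) (hκ : 0 < κ) (y : ℝ) : lf κ a y ≤ 1 := by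
  unfold lf; rw [Real.exp_le_one_iff]
  have := ha.pow_nonneg y
  have : 0 ≤ κ * y ^ a := by positivity
  linarith

lemma lf_anti (κ : ℝ) (a : ℕ) (hκ : 0 < κ) (x y : ℝ) (hx : 0 ≤ x) (hxy : x ≤ y) :
    lf κ a y ≤ lf κ a x := by
  unfold lf
  apply Real.exp_le_exp.mpr
  have : x ^ a ≤ y ^ a := by gcongr
  have : κ * x ^ a ≤ κ * y ^ a := by gcongr
  linarith

lemma integrable_pow_lf (κ : ℝ) (a : ℕ) (ha : Even a) (ha2 : 2 ≤ a) (hκ : 0 < κ) (p : ℕ) :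
    Integrable (fun y : ℝ => |y| ^ p * lf κ a y) := by
  have h1 := (integrable_rpow_mul_exp_neg_mul_sq hκ (s := (p : ℝ)) (by
    have : (0 : ℝ) ≤ p := by positivity
    linarith)).norm.const_mul (Real.exp κ)
  refine h1.mono' ?_ (Filter.Eventually.of_forall fun y => ?_)
  · exact Continuous.aestronglyMeasurable (by have := continuous_lf κ a; fun_prop)
  · rw [Real.norm_eq_abs, abs_of_nonneg (mul_nonneg (by positivity) (lf_pos κ a y).le), norm_mul,
      Real.rpow_natCast, norm_pow, Real.norm_eq_abs, Real.norm_eq_abs, abs_of_pos (Real.exp_pos _)]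
    have h2 : y ^ 2 - 1 ≤ y ^ a := by
      obtain ⟨c, hc⟩ := ha
      have e : y ^ a = (y ^ 2) ^ c := by rw [← pow_mul, hc]; congr 1; omega
      rw [e]
      rcases le_total 1 (y ^ 2) with h | h
      · have := le_self_pow₀ h (show c ≠ 0 by omega)
        linarith
      · have : 0 ≤ (y ^ 2) ^ c := by positivity
        linarith
    have h3 : lf κ a y ≤ Real.exp κ * Real.exp (-κ * y ^ 2) := by
      unfold lf
      rw [← Real.exp_add]
      apply Real.exp_le_exp.mpr
      have : κ * (y ^ 2 - 1) ≤ κ * y ^ a := by gcongr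
      linarith
    calc |y| ^ p * lf κ a y ≤ |y| ^ p * (Real.exp κ * Real.exp (-κ * y ^ 2)) := by gcongr
      _ = _ := by ring

lemma integrable_lf (κ : ℝ) (a : ℕ) (ha : Even a) (ha2 : 2 ≤ a) (hκ : 0 < κ) :
    Integrable (lf κ a) := by
  simpa using integrable_pow_lf κ a ha ha2 hκ 0

lemma q_le (p : ℕ) (y : ℝ) (hy : 0 ≤ y) : (1 + y) ^ p ≤ 2 ^ (p - 1) * (1 + y ^ p) := by
  have := add_pow_le (zero_le_one' ℝ) hy p
  simpa using this

lemma integrable_q_lf (κ : ℝ) (a : ℕ) (ha : Even a) (ha2 : 2 ≤ a) (hκ : 0 < κ) (p : ℕ) :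
    Integrable (fun y : ℝ => (1 + |y|) ^ p * lf κ a y) := by
  have h1 := ((integrable_lf κ a ha ha2 hκ).add (integrable_pow_lf κ a ha ha2 hκ p)).const_mul
    (2 ^ (p - 1))
  refine h1.mono' ?_ (Filter.Eventually.of_forall fun y => ?_)
  · exact Continuous.aestronglyMeasurable (by have := continuous_lf κ a; fun_prop)
  · rw [Real.norm_eq_abs, abs_of_nonneg (mul_nonneg (by positivity) (lf_pos κ a y).le)]
    simp only [Pi.add_apply]
    have := mul_le_mul_of_nonneg_right (q_le p |y| (abs_nonneg y)) (lf_pos κ a y).le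
    linarith

/-- Unnormalized tail. -/
noncomputable def lI (κ : ℝ) (a : ℕ) (z : ℝ) : ℝ := ∫ y in Set.Ioi z, lf κ a y

lemma lI_lower (κ : ℝ) (a : ℕ) (ha : Even a) (ha2 : 2 ≤ a) (hκ : 0 < κ) :
    ∃ K : ℝ, 0 < K ∧ ∀ z : ℝ, 0 ≤ z → lf κ a z ≤ K * (1 + z) ^ (a - 1) * lI κ a z := by
  refine ⟨Real.exp (κ * a), Real.exp_pos _, fun z hz => ?_⟩
  set t : ℝ := 1 / (1 + z) ^ (a - 1) with ht
  have ht0 : 0 < t := by positivity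
  have ht1 : t ≤ 1 := by
    rw [ht, div_le_one (by positivity)]
    exact one_le_pow₀ (by linarith)
  have h1 : (z + t) ^ a - z ^ a ≤ a := by
    have h2 := abs_pow_sub_pow_le (z + t) z a
    have h3 : max |z + t| |z| ≤ 1 + z := by
      rw [abs_of_nonneg (by linarith), abs_of_nonneg hz]
      apply max_le <;> linarith
    calc (z + t) ^ a - z ^ a ≤ |(z + t) ^ a - z ^ a| := le_abs_self _
      _ ≤ _ := h2
      _ = t * a * max |z + t| |z| ^ (a - 1) := by
        rw [add_sub_cancel_left, abs_of_pos ht0]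
      _ ≤ t * a * (1 + z) ^ (a - 1) := by gcongr
      _ = a := by rw [ht]; field_simp
  have h2 : lf κ a z ≤ Real.exp (κ * a) * lf κ a (z + t) := by
    unfold lf
    rw [← Real.exp_add]
    apply Real.exp_le_exp.mpr
    have : κ * ((z + t) ^ a - z ^ a) ≤ κ * a := by gcongr
    linarith
  have h3 : t * lf κ a (z + t) ≤ lI κ a z := by
    have hInteg := integrable_lf κ a ha ha2 hκ
    calc t * lf κ a (z + t) = ∫ y in Set.Ioc z (z + t), lf κ a (z + t) := by
          rw [setIntegral_const]; simp [ht0.le]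
      _ ≤ ∫ y in Set.Ioc z (z + t), lf κ a y := by
          apply setIntegral_mono_on _ hInteg.integrableOn measurableSet_Ioc
          · intro y hy
            exact lf_anti κ a hκ y (z + t) (by linarith [hy.1]) hy.2
          · exact integrableOn_const (by simp)
      _ ≤ lI κ a z := by
          apply setIntegral_mono_set hInteg.integrableOn
          · exact Filter.Eventually.of_forall fun y => (lf_pos κ a y).le
          · exact (Set.Ioc_subset_Ioi_self).eventuallyLE
  have h4 : lf κ a (z + t) ≤ (1 + z) ^ (a - 1) * lI κ a z := by
    have : lf κ a (z + t) = (1 + z) ^ (a - 1) * (t * lf κ a (z + t)) := by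
      rw [ht]; field_simp
    rw [this]; gcongr
  calc lf κ a z ≤ Real.exp (κ * a) * lf κ a (z + t) := h2
    _ ≤ Real.exp (κ * a) * ((1 + z) ^ (a - 1) * lI κ a z) := by gcongr
    _ = _ := by ring

lemma lI_pos (κ : ℝ) (a : ℕ) (ha : Even a) (ha2 : 2 ≤ a) (hκ : 0 < κ) (z : ℝ) (hz : 0 ≤ z) :
    0 < lI κ a z := by
  obtain ⟨K, hK, h⟩ := lI_lower κ a ha ha2 hκ
  by_contra hc
  have h1 := h z hz
  have h2 := lf_pos κ a z
  have : K * (1 + z) ^ (a - 1) * lI κ a z ≤ 0 :=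
    mul_nonpos_of_nonneg_of_nonpos (by positivity) (by linarith)
  linarith

lemma lI_anti (κ : ℝ) (a : ℕ) (ha : Even a) (ha2 : 2 ≤ a) (hκ : 0 < κ) (x y : ℝ) (hxy : x ≤ y) :
    lI κ a y ≤ lI κ a x := by
  apply setIntegral_mono_set (integrable_lf κ a ha ha2 hκ).integrableOn
  · exact Filter.Eventually.of_forall fun y => (lf_pos κ a y).le
  · exact (Set.Ioi_subset_Ioi hxy).eventuallyLE

lemma lI_moment (κ : ℝ) (a : ℕ) (ha : Even a) (ha2 : 2 ≤ a) (hκ : 0 < κ) (z : ℝ) (hz : 0 ≤ z) :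
    ∫ y in Set.Ioi z, |y| ^ (a + 1) * lf κ a y ≤
      2 / (κ * a) * lI κ a z + (z ^ 2 / (κ * a) + 2 / (κ * a) ^ 2) * lf κ a z := by
  have ha0 : (0 : ℝ) < a := by
    have : 0 < a := by omega
    exact_mod_cast this
  set c : ℝ := κ * a with hc
  have hc0 : 0 < c := by positivity
  have hInteg := integrable_lf κ a ha ha2 hκ
  have hcont := continuous_lf κ a
  refine le_of_tendsto (intervalIntegral_tendsto_integral_Ioi z
    (integrable_pow_lf κ a ha ha2 hκ (a + 1)).integrableOn Filter.tendsto_id) ?_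
  filter_upwards [Filter.eventually_ge_atTop z] with R hR
  simp only [id]
  have hV : ∀ y ∈ Set.uIcc z R, HasDerivAt (fun y => -((y ^ 2 / c + 2 / c ^ 2) * lf κ a y))
      ((y ^ 2 / c + 2 / c ^ 2) * (c * y ^ (a - 1)) * lf κ a y - 2 * y / c * lf κ a y) y := by
    intro y _
    have d1 : HasDerivAt (fun y : ℝ => y ^ 2 / c + 2 / c ^ 2) (2 * y / c) y := by
      simpa using ((hasDerivAt_pow 2 y).div_const c).add_const (2 / c ^ 2)
    have d2 : HasDerivAt (lf κ a) (lf κ a y * -(κ * (a * y ^ (a - 1)))) y := by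
      have := (((hasDerivAt_pow a y).const_mul κ).neg).exp
      exact this
    refine (d1.mul d2).neg.congr_deriv ?_
    rw [hc]; ring
  have hI := intervalIntegral.integral_eq_sub_of_hasDerivAt hV
    (Continuous.intervalIntegrable (by fun_prop) _ _)
  have hle : ∫ y in z..R, |y| ^ (a + 1) * lf κ a y ≤ ∫ y in z..R,
      (((y ^ 2 / c + 2 / c ^ 2) * (c * y ^ (a - 1)) * lf κ a y - 2 * y / c * lf κ a y) +
        2 / c * lf κ a y) := by
    apply intervalIntegral.integral_mono_on hR
    · exact Continuous.intervalIntegrable (by fun_prop) _ _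
    · exact Continuous.intervalIntegrable (by fun_prop) _ _
    · intro y hy
      have hy0 : 0 ≤ y := hz.trans hy.1
      rw [abs_of_nonneg hy0]
      have e : ((y ^ 2 / c + 2 / c ^ 2) * (c * y ^ (a - 1)) * lf κ a y - 2 * y / c * lf κ a y) +
        2 / c * lf κ a y = (y ^ 2 * y ^ (a - 1) + 2 / c * (y ^ (a - 1) + 1 - y)) * lf κ a y := by
        field_simp; ring
      rw [e]
      have e2 : y ^ 2 * y ^ (a - 1) = y ^ (a + 1) := by
        rw [← pow_add]; congr 1; omega
      have e3 : 0 ≤ y ^ (a - 1) + 1 - y := by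
        rcases le_total 1 y with h | h
        · have := le_self_pow₀ h (show a - 1 ≠ 0 by omega)
          linarith
        · have : 0 ≤ y ^ (a - 1) := by positivity
          linarith
      have := lf_pos κ a y
      have : 0 ≤ 2 / c * (y ^ (a - 1) + 1 - y) := by positivity
      rw [e2]
      gcongr
      linarith
  rw [intervalIntegral.integral_add (Continuous.intervalIntegrable (by fun_prop) _ _)
    (Continuous.intervalIntegrable (by fun_prop) _ _), hI, intervalIntegral.integral_const_mul] at hle
  have h5 : ∫ y in z..R, lf κ a y ≤ lI κ a z := by
    rw [intervalIntegral.integral_of_le hR]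
    apply setIntegral_mono_set hInteg.integrableOn
    · exact Filter.Eventually.of_forall fun y => (lf_pos κ a y).le
    · exact (Set.Ioc_subset_Ioi_self).eventuallyLE
  have h6 : 0 ≤ (R ^ 2 / c + 2 / c ^ 2) * lf κ a R := by
    have := lf_pos κ a R
    positivity
  have h7 : 2 / c * ∫ y in z..R, lf κ a y ≤ 2 / c * lI κ a z := by gcongr
  linarith

lemma lI_qmoment (κ : ℝ) (a : ℕ) (ha : Even a) (ha2 : 2 ≤ a) (hκ : 0 < κ) :
    ∃ K : ℝ, 0 < K ∧ ∀ z : ℝ, 0 ≤ z →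
      ∫ y in Set.Ioi z, (1 + |y|) ^ (a + 1) * lf κ a y ≤ K * (1 + z) ^ (a + 1) * lI κ a z := by
  obtain ⟨K, hK, hl⟩ := lI_lower κ a ha ha2 hκ
  have ha0 : (0 : ℝ) < a := by
    have : 0 < a := by omega
    exact_mod_cast this
  set c : ℝ := κ * a with hc
  have hc0 : 0 < c := by positivity
  refine ⟨2 ^ a * (1 + 2 / c + K / c + 2 * K / c ^ 2), by positivity, fun z hz => ?_⟩
  have hInteg := integrable_lf κ a ha ha2 hκ
  have hintp := integrable_pow_lf κ a ha ha2 hκ (a + 1)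
  have hI := lI_pos κ a ha ha2 hκ z hz
  have h1 : ∫ y in Set.Ioi z, (1 + |y|) ^ (a + 1) * lf κ a y ≤
      ∫ y in Set.Ioi z, 2 ^ a * (lf κ a y + |y| ^ (a + 1) * lf κ a y) := by
    apply setIntegral_mono (integrable_q_lf κ a ha ha2 hκ (a + 1)).integrableOn
      ((hInteg.add hintp).const_mul _).integrableOn
    intro y
    have := mul_le_mul_of_nonneg_right (q_le (a + 1) |y| (abs_nonneg y)) (lf_pos κ a y).le
    simp only [Nat.add_sub_cancel, Pi.add_apply] at this ⊢
    linarith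
  rw [integral_const_mul, integral_add hInteg.integrableOn hintp.integrableOn] at h1
  have h2 := lI_moment κ a ha ha2 hκ z hz
  have h3 := hl z hz
  have p1 : (1 : ℝ) ≤ (1 + z) ^ (a + 1) := one_le_pow₀ (by linarith)
  have p2 : (1 + z) ^ (a - 1) ≤ (1 + z) ^ (a + 1) :=
    pow_le_pow_right₀ (by linarith) (by omega)
  have p3 : z ^ 2 * (1 + z) ^ (a - 1) ≤ (1 + z) ^ (a + 1) := by
    have : (1 + z) ^ (a + 1) = (1 + z) ^ 2 * (1 + z) ^ (a - 1) := by
      rw [← pow_add]; congr 1; omega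
    rw [this]; gcongr; linarith
  rw [← hc] at h2
  have e1 : (z ^ 2 / c + 2 / c ^ 2) * lf κ a z ≤
      (K / c + 2 * K / c ^ 2) * (1 + z) ^ (a + 1) * lI κ a z := by
    calc (z ^ 2 / c + 2 / c ^ 2) * lf κ a z
        ≤ (z ^ 2 / c + 2 / c ^ 2) * (K * (1 + z) ^ (a - 1) * lI κ a z) := by gcongr
      _ = (K / c * (z ^ 2 * (1 + z) ^ (a - 1)) + 2 * K / c ^ 2 * (1 + z) ^ (a - 1)) * lI κ a z := by
          field_simp
      _ ≤ (K / c * (1 + z) ^ (a + 1) + 2 * K / c ^ 2 * (1 + z) ^ (a + 1)) * lI κ a z := by gcongr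
      _ = _ := by ring
  have e2 : lI κ a z ≤ (1 + z) ^ (a + 1) * lI κ a z := le_mul_of_one_le_left hI.le p1
  have e3 : 2 / c * lI κ a z ≤ 2 / c * ((1 + z) ^ (a + 1) * lI κ a z) := by gcongr
  refine h1.trans ?_
  rw [show 2 ^ a * (1 + 2 / c + K / c + 2 * K / c ^ 2) * (1 + z) ^ (a + 1) * lI κ a z =
    2 ^ a * ((1 + z) ^ (a + 1) * lI κ a z + (2 / c * ((1 + z) ^ (a + 1) * lI κ a z) +
      (K / c + 2 * K / c ^ 2) * (1 + z) ^ (a + 1) * lI κ a z)) by ring]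
  have e4 : ∫ y in Set.Ioi z, lf κ a y = lI κ a z := rfl
  rw [e4]
  gcongr
  linarith

lemma lI_tail (κ : ℝ) (a : ℕ) (ha : Even a) (ha2 : 2 ≤ a) (hκ : 0 < κ) :
    ∃ K : ℝ, 0 < K ∧ ∀ Z : ℝ, 0 ≤ Z → lI κ a (2 * Z) ≤ K * Real.exp (-(2 * κ * Z ^ a)) := by
  have hint2 := integrable_lf (κ / 2) a ha ha2 (by positivity)
  have hnn : 0 ≤ ∫ y, lf (κ / 2) a y := integral_nonneg fun y => (lf_pos _ a y).le
  refine ⟨(∫ y, lf (κ / 2) a y) + 1, by positivity, fun Z hZ => ?_⟩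
  have hInteg := integrable_lf κ a ha ha2 hκ
  calc lI κ a (2 * Z) ≤ ∫ y in Set.Ioi (2 * Z), Real.exp (-(2 * κ * Z ^ a)) * lf (κ / 2) a y := by
        apply setIntegral_mono_on hInteg.integrableOn (hint2.const_mul _).integrableOn
          measurableSet_Ioi
        intro y hy
        have hy' : 2 * Z ≤ y := le_of_lt hy
        have h1 : (2 * Z) ^ a ≤ y ^ a := by gcongr
        have h2 : 4 * Z ^ a ≤ (2 * Z) ^ a := by
          rw [mul_pow]
          have : (2 : ℝ) ^ 2 ≤ 2 ^ a := pow_le_pow_right₀ (by norm_num) ha2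
          gcongr
          linarith
        unfold lf
        rw [← Real.exp_add]
        apply Real.exp_le_exp.mpr
        have : κ * (4 * Z ^ a) ≤ κ * y ^ a := by gcongr; linarith
        linarith
    _ = Real.exp (-(2 * κ * Z ^ a)) * ∫ y in Set.Ioi (2 * Z), lf (κ / 2) a y := by
        rw [integral_const_mul]
    _ ≤ Real.exp (-(2 * κ * Z ^ a)) * ∫ y, lf (κ / 2) a y := by
        exact mul_le_mul_of_nonneg_left (setIntegral_le_integral hint2
          (Filter.Eventually.of_forall fun y => (lf_pos _ a y).le)) (Real.exp_pos _).le
    _ ≤ _ := by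
        have := Real.exp_pos (-(2 * κ * Z ^ a))
        nlinarith

lemma lI_neg (κ : ℝ) (a : ℕ) (ha : Even a) (ha2 : 2 ≤ a) (hκ : 0 < κ) (L : ℝ) :
    lI κ a (-L) = (∫ y, lf κ a y) - lI κ a L := by
  have hInteg := integrable_lf κ a ha ha2 hκ
  have h1 : ∫ y in Set.Iic (-L), lf κ a y = lI κ a L := by
    have := integral_comp_neg_Ioi L (lf κ a)
    simp only [lf_even κ a ha] at this
    exact this.symm
  have h2 := intervalIntegral.integral_Iic_add_Ioi (b := -L) (hInteg.integrableOn) (hInteg.integrableOn)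
  unfold lI at *
  linarith


lemma tele_bound (f : ℕ → ℝ) (c : ℝ) (i j : ℕ) (hij : i ≤ j)
    (H : ∀ k, i ≤ k → k < j → |f (k + 1) - f k| ≤ c) : |f j - f i| ≤ ((j : ℝ) - i) * c := by
  induction j, hij using Nat.le_induction with
  | base => simp
  | succ j hj ih =>
    have h1 := ih (fun k hk hk' => H k hk (by omega))
    have h2 := H j hj (by omega)
    have h3 := abs_sub_le (f (j + 1)) (f j) (f i)
    push_cast
    linarith

lemma mdm_sub (n d e : ℕ) (hn : 1 ≤ n) : (d : ℝ) - e = n / 2 * (mdm n e - mdm n d) := by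
  have : (n : ℝ) ≠ 0 := by positivity
  unfold mdm; field_simp; ring

lemma mdm_anti (n d e : ℕ) (h : d ≤ e) : mdm n e ≤ mdm n d := by
  unfold mdm
  have : (d : ℝ) ≤ e := by exact_mod_cast h
  gcongr

/-- Telescoped local comparison. -/
lemma local_tele (J h m₀ : ℝ) (hJ : 0 ≤ J) (h0 : 0 < m₀) (h1 : m₀ < 1) :
    ∃ δ C, 0 < δ ∧ 0 < C ∧ ∀ n : ℕ, 1 ≤ n → 2 / (n : ℝ) ≤ δ → ∃ e : ℕ, 2 * e ≤ n ∧
      ∀ d : ℕ, |mdm n d - m₀| ≤ δ →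
      |(Real.log (mdW J h n d) - n * mdF J h (mdm n d)) -
        (Real.log (mdW J h n e) - n * mdF J h (mdm n e))| ≤ C * |mdm n d - m₀| + C / n := by
  obtain ⟨η, hη, hη0, hη1, hw⟩ := window_exists m₀ h0 h1
  obtain ⟨C, hC, hinc⟩ := mdW_incr J h η hJ hη
  refine ⟨η, C, hη, hC, fun n hn hnη => ?_⟩
  have hn0 : (0 : ℝ) < n := by exact_mod_cast hn
  set e := ⌊(n : ℝ) * (1 - m₀) / 2⌋₊ with he
  have hT : 0 ≤ (n : ℝ) * (1 - m₀) / 2 := by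
    have : 0 < 1 - m₀ := by linarith
    positivity
  have he1 : (e : ℝ) ≤ (n : ℝ) * (1 - m₀) / 2 := Nat.floor_le hT
  have he2 : (n : ℝ) * (1 - m₀) / 2 < e + 1 := Nat.lt_floor_add_one _
  have hme : |mdm n e - m₀| ≤ 2 / n := by
    have : mdm n e - m₀ = 2 / n * ((n : ℝ) * (1 - m₀) / 2 - e) := by
      unfold mdm; field_simp; ring
    rw [this, abs_mul, abs_of_pos (by positivity : (0 : ℝ) < 2 / n)]
    have : |(n : ℝ) * (1 - m₀) / 2 - e| ≤ 1 := by rw [abs_le]; constructor <;> linarith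
    nlinarith [(by positivity : (0 : ℝ) < 2 / n)]
  have hwe := abs_le.mp (hme.trans hnη)
  refine ⟨e, ?_, fun d hd => ?_⟩
  · have : (2 * e : ℝ) ≤ n := by nlinarith
    exact_mod_cast this
  have hwd := abs_le.mp hd
  set f : ℕ → ℝ := fun d => Real.log (mdW J h n d) - n * mdF J h (mdm n d) with hf
  have key : ∀ i j : ℕ, i ≤ j → |mdm n i - m₀| ≤ η → |mdm n j - m₀| ≤ η →
      |f j - f i| ≤ ((j : ℝ) - i) * (C / n) := by
    intro i j hij hi hj
    apply tele_bound f _ i j hij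
    intro k hk hk'
    have hi := abs_le.mp hi
    have hj := abs_le.mp hj
    have a1 := mdm_anti n i k hk
    have a2 := mdm_anti n k (k + 1) (by omega)
    have a3 := mdm_anti n (k + 1) j (by omega)
    have b1 := hw (mdm n k) (abs_le.mpr ⟨by linarith, by linarith⟩)
    have b2 := hw (mdm n (k + 1)) (abs_le.mpr ⟨by linarith, by linarith⟩)
    refine hinc n k hn ?_ ⟨b1.1, by linarith⟩ ⟨b2.1, by linarith⟩
    by_contra hcon
    have hcon : (n : ℝ) ≤ 2 * ((k + 1 : ℕ) : ℝ) := by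
      have : n ≤ 2 * (k + 1) := by omega
      exact_mod_cast this
    have : mdm n (k + 1) ≤ 0 := by
      unfold mdm
      apply div_nonpos_of_nonpos_of_nonneg <;> linarith
    linarith [b2.1]
  have hme' := hme.trans hnη
  have hcn : 0 < C / n := by positivity
  have hfin : |f d - f e| ≤ |(d : ℝ) - e| * (C / n) := by
    rcases le_total d e with hde | hde
    · have := key d e hde hd hme'
      rw [abs_sub_comm] at this
      refine this.trans ?_
      gcongr
      rw [abs_sub_comm]; exact le_abs_self _
    · refine (key e d hde hme' hd).trans ?_
      gcongr
      exact le_abs_self _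
  refine hfin.trans ?_
  rw [mdm_sub n d e hn, abs_mul, abs_of_pos (by positivity : (0 : ℝ) < n / 2)]
  have h3 : |mdm n e - mdm n d| ≤ 2 / n + |mdm n d - m₀| := by
    have := abs_sub_le (mdm n e) m₀ (mdm n d)
    rw [abs_sub_comm m₀] at this
    linarith
  calc (n : ℝ) / 2 * |mdm n e - mdm n d| * (C / n) = C / 2 * |mdm n e - mdm n d| := by
        field_simp
    _ ≤ C / 2 * (2 / n + |mdm n d - m₀|) := by gcongr
    _ ≤ _ := by
        have : C / 2 * (2 / n + |mdm n d - m₀|) = C / n + C / 2 * |mdm n d - m₀| := by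
          field_simp
        rw [this]
        nlinarith [abs_nonneg (mdm n d - m₀)]

set_option maxHeartbeats 1000000 in
lemma lap_est (J h m₀ κ : ℝ) (a : ℕ) (ha : Even a) (ha2 : 2 ≤ a) (H : LapHyp J h m₀ κ a) :
    ∃ C Z0 : ℝ, 0 < C ∧ 1 ≤ Z0 ∧ ∀ (n : ℕ) (Z : ℝ), Z0 ≤ Z → (n : ℝ) = Z ^ (a * (a + 1)) →
      ∃ (r : ℕ → ℝ) (W : ℝ), 0 < W ∧ (∀ d, mdW J h n d = W * r d) ∧ (∀ d, 0 < r d) ∧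
      (∀ d, |Z ^ (a + 1) * (mdm n d - m₀)| ≤ 2 * Z →
        |Real.log (r d) + κ * (Z ^ (a + 1) * (mdm n d - m₀)) ^ a| ≤
          C * (1 + |Z ^ (a + 1) * (mdm n d - m₀)|) ^ (a + 1) / Z ^ (a + 1)) ∧
      (∀ d, 2 * d ≤ n → 2 * Z < |Z ^ (a + 1) * (mdm n d - m₀)| →
        r d ≤ C * (n : ℝ) ^ 4 * Real.exp (-(2 * κ * Z ^ a))) := by
  obtain ⟨hJ, hκ, h0, h1, ⟨δ₁, C₁, hδ₁, hC₁, -, -, hloc⟩, hmax⟩ := H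
  obtain ⟨δ₂, C₂, hδ₂, hC₂, htele⟩ := local_tele J h m₀ hJ h0 h1
  set δ := min (min δ₁ δ₂) (min 1 (κ / (2 * C₁))) with hδdef
  have hδ : 0 < δ := by positivity
  have hδ1 : δ ≤ δ₁ := (min_le_left _ _).trans (min_le_left _ _)
  have hδ2 : δ ≤ δ₂ := (min_le_left _ _).trans (min_le_right _ _)
  have hδ3 : δ ≤ 1 := (min_le_right _ _).trans (min_le_left _ _)
  have hδ4 : C₁ * δ ≤ κ / 2 := by
    have : δ ≤ κ / (2 * C₁) := (min_le_right _ _).trans (min_le_right _ _)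
    calc C₁ * δ ≤ C₁ * (κ / (2 * C₁)) := by gcongr
      _ = κ / 2 := by field_simp
  obtain ⟨c, hc, hgap⟩ := mdF_gap J h m₀ hmax δ hδ
  refine ⟨C₁ + 2 * C₂ + Real.exp (2 * C₂) + Real.exp 4,
    1 + 2 / δ + 2 / δ₂ + 2 * κ / c, by positivity, ?_, ?_⟩
  · have : 0 ≤ 2 / δ + 2 / δ₂ + 2 * κ / c := by positivity
    linarith
  intro n Z hZ hnZ
  have p1 : 0 < 2 / δ := by positivity
  have p2 : 0 < 2 / δ₂ := by positivity
  have p3 : 0 < 2 * κ / c := by positivity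
  have hZ1 : 1 ≤ Z := by linarith
  have hZ0 : 0 < Z := by linarith
  have hnR : (1 : ℝ) ≤ n := by rw [hnZ]; exact one_le_pow₀ hZ1
  have hn : 1 ≤ n := by exact_mod_cast hnR
  have hn0 : (0 : ℝ) < n := by linarith
  have hZn : Z ^ (a + 1) ≤ n := by
    rw [hnZ]; exact pow_le_pow_right₀ hZ1 (by nlinarith)
  have hZn1 : Z ≤ Z ^ (a + 1) := le_self_pow₀ hZ1 (by omega)
  have hnδ : 2 / (n : ℝ) ≤ δ₂ := by
    rw [div_le_iff₀ hn0]
    have : 2 / δ₂ ≤ n := by linarith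
    rw [div_le_iff₀ hδ₂] at this
    linarith
  obtain ⟨e, hen, hte⟩ := htele n hn hnδ
  set A : ℝ := Real.log (mdW J h n e) - n * mdF J h (mdm n e) + n * mdF J h m₀ with hA
  have hlr : ∀ d, Real.log (mdW J h n d * Real.exp (-A)) = Real.log (mdW J h n d) - A := by
    intro d
    rw [Real.log_mul (mdW_pos J h n d).ne' (Real.exp_pos _).ne', Real.log_exp]; ring
  set ν := Z ^ (a + 1) with hν
  have hν0 : 0 < ν := by positivity
  have hν1 : 1 ≤ ν := one_le_pow₀ hZ1
  have hnν : (n : ℝ) = ν ^ a := by rw [hnZ, hν, ← pow_mul, mul_comm]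
  -- local estimate
  have hL : ∀ d, |mdm n d - m₀| ≤ δ →
      |Real.log (mdW J h n d * Real.exp (-A)) + κ * (ν * (mdm n d - m₀)) ^ a| ≤
        C₁ * (n * |mdm n d - m₀| ^ (a + 1)) + (C₂ * |mdm n d - m₀| + C₂ / n) := by
    intro d hd
    have e1 := hte d (hd.trans hδ2)
    have e2 := hloc _ (hd.trans hδ1)
    rw [hlr]
    have e3 : Real.log (mdW J h n d) - A + κ * (ν * (mdm n d - m₀)) ^ a =
      n * (mdF J h (mdm n d) - mdF J h m₀ + κ * (mdm n d - m₀) ^ a) +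
      ((Real.log (mdW J h n d) - n * mdF J h (mdm n d)) -
        (Real.log (mdW J h n e) - n * mdF J h (mdm n e))) := by
      rw [mul_pow, ← hnν, hA]; ring
    rw [e3]
    refine (abs_add_le _ _).trans ?_
    rw [abs_mul, abs_of_pos hn0]
    have : (n : ℝ) * |mdF J h (mdm n d) - mdF J h m₀ + κ * (mdm n d - m₀) ^ a| ≤
      n * (C₁ * |mdm n d - m₀| ^ (a + 1)) := by gcongr
    linarith
  refine ⟨fun d => mdW J h n d * Real.exp (-A), Real.exp A, Real.exp_pos _, ?_, ?_, ?_, ?_⟩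
  · intro d
    rw [mul_comm, mul_assoc, ← Real.exp_add]; simp
  · intro d
    exact mul_pos (mdW_pos J h n d) (Real.exp_pos _)
  · intro d hd
    have hd' : |mdm n d - m₀| ≤ δ := by
      rw [abs_mul, abs_of_pos hν0] at hd
      have h2 : 2 / δ ≤ Z ^ a := by
        have : Z ≤ Z ^ a := le_self_pow₀ hZ1 (by omega)
        linarith
      rw [div_le_iff₀ hδ] at h2
      have h3 : ν = Z ^ a * Z := by rw [hν, pow_succ]
      rw [h3] at hd
      have h4 : Z ^ a * |mdm n d - m₀| ≤ 2 := by nlinarith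
      have h5 : 0 < Z ^ a := by positivity
      by_contra hcon
      push Not at hcon
      nlinarith
    refine (hL d hd').trans ?_
    set x := |mdm n d - m₀| with hx
    have hx0 : 0 ≤ x := abs_nonneg _
    have hy : |ν * (mdm n d - m₀)| = ν * x := by rw [abs_mul, abs_of_pos hν0]
    rw [hy, le_div_iff₀ hν0]
    have q0 : 1 ≤ 1 + ν * x := by nlinarith
    have q1 : (ν * x) ^ (a + 1) ≤ (1 + ν * x) ^ (a + 1) := by gcongr; linarith
    have q2 : 1 + ν * x ≤ (1 + ν * x) ^ (a + 1) := le_self_pow₀ q0 (by omega)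
    have q3 : (n : ℝ) * x ^ (a + 1) * ν = (ν * x) ^ (a + 1) := by rw [hnν, mul_pow]; ring
    have q4 : C₂ / n * ν ≤ C₂ := by
      rw [div_mul_eq_mul_div, div_le_iff₀ hn0]; gcongr
    have r1 : 0 < Real.exp (2 * C₂) := Real.exp_pos _
    have r2 : 0 < Real.exp (4 : ℝ) := Real.exp_pos _
    have q5 : 0 ≤ (1 + ν * x) ^ (a + 1) := by positivity
    calc (C₁ * (n * x ^ (a + 1)) + (C₂ * x + C₂ / n)) * ν
        = C₁ * (n * x ^ (a + 1) * ν) + C₂ * (ν * x) + C₂ / n * ν := by ring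
      _ ≤ C₁ * (1 + ν * x) ^ (a + 1) + C₂ * (1 + ν * x) ^ (a + 1) + C₂ * (1 + ν * x) ^ (a + 1) := by
          rw [q3]
          have : C₂ * (ν * x) + C₂ / n * ν ≤ C₂ * (1 + ν * x) := by linarith
          have : C₂ * (1 + ν * x) ≤ C₂ * (1 + ν * x) ^ (a + 1) := by gcongr
          have : C₁ * (ν * x) ^ (a + 1) ≤ C₁ * (1 + ν * x) ^ (a + 1) := by gcongr
          have : 0 ≤ C₂ * (1 + ν * x) ^ (a + 1) := by positivity
          linarith
      _ = (C₁ + 2 * C₂) * (1 + ν * x) ^ (a + 1) := by ring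
      _ ≤ _ := mul_le_mul_of_nonneg_right (by linarith) q5
  · intro d hdn hd
    have hr : 0 < mdW J h n d * Real.exp (-A) := mul_pos (mdW_pos J h n d) (Real.exp_pos _)
    have hn4 : (1 : ℝ) ≤ (n : ℝ) ^ 4 := one_le_pow₀ hnR
    by_cases hcase : |mdm n d - m₀| ≤ δ
    · have e1 := (abs_le.mp (hL d hcase)).2
      set x := |mdm n d - m₀| with hx
      have hx0 : 0 ≤ x := abs_nonneg _
      have hy : |ν * (mdm n d - m₀)| = ν * x := by rw [abs_mul, abs_of_pos hν0]
      have hya : (ν * (mdm n d - m₀)) ^ a = (ν * x) ^ a := by rw [← hy, ha.pow_abs]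
      have e2 : C₁ * (n * x ^ (a + 1)) ≤ κ / 2 * (ν * x) ^ a := by
        calc C₁ * (n * x ^ (a + 1)) = (C₁ * x) * (ν * x) ^ a := by rw [hnν, mul_pow]; ring
          _ ≤ (C₁ * δ) * (ν * x) ^ a := by gcongr
          _ ≤ _ := by gcongr
      have e3 : C₂ * x + C₂ / n ≤ 2 * C₂ := by
        have : C₂ / n ≤ C₂ := div_le_self hC₂.le hnR
        nlinarith
      have e4 : 4 * Z ^ a ≤ (ν * x) ^ a := by
        rw [hy] at hd
        calc 4 * Z ^ a = 2 ^ 2 * Z ^ a := by norm_num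
          _ ≤ 2 ^ a * Z ^ a := by gcongr; norm_num
          _ = (2 * Z) ^ a := by rw [mul_pow]
          _ ≤ _ := by gcongr
      rw [hya] at e1
      have e5 : Real.log (mdW J h n d * Real.exp (-A)) ≤ 2 * C₂ + -(2 * κ * Z ^ a) := by nlinarith
      have e6 := (Real.log_le_iff_le_exp hr).mp e5
      rw [Real.exp_add] at e6
      refine e6.trans ?_
      gcongr
      have r2 : 0 < Real.exp (4 : ℝ) := Real.exp_pos _
      have r1 : 0 < Real.exp (2 * C₂) := Real.exp_pos _
      nlinarith
    · push Not at hcase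
      have hdI : mdm n d ∈ Set.Icc (0 : ℝ) 1 := by
        have : (2 * d : ℝ) ≤ n := by exact_mod_cast hdn
        constructor
        · unfold mdm; apply div_nonneg <;> linarith
        · unfold mdm; rw [div_le_one hn0]
          have : (0 : ℝ) ≤ d := by positivity
          linarith
      have g1 := hgap _ hdI hcase.le
      have g2 := (abs_le.mp (mdW_global J h n d hn hdn)).2
      have g3 := (abs_le.mp (mdW_global J h n e hn hen)).1
      have g4 : 2 * κ * Z ^ a ≤ c * n := by
        have : 2 * κ / c ≤ Z := by linarith
        rw [div_le_iff₀ hc] at this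
        have h5 : Z ^ (a + 1) = Z * Z ^ a := by rw [pow_succ]; ring
        calc 2 * κ * Z ^ a ≤ (Z * c) * Z ^ a := by gcongr
          _ = c * Z ^ (a + 1) := by rw [h5]; ring
          _ ≤ c * n := by gcongr
      have g5 : Real.log (mdW J h n d * Real.exp (-A)) ≤
          4 + Real.log ((n : ℝ) ^ 4) + -(2 * κ * Z ^ a) := by
        rw [hlr, Real.log_pow]
        have := mul_le_mul_of_nonneg_left g1 hn0.le
        push_cast
        nlinarith
      have g6 := (Real.log_le_iff_le_exp hr).mp g5
      rw [Real.exp_add, Real.exp_add, Real.exp_log (by positivity)] at g6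
      refine g6.trans ?_
      gcongr
      have r1 : 0 < Real.exp (2 * C₂) := Real.exp_pos _
      linarith


lemma riemann_cmp (f g : ℝ → ℝ) (hf : Continuous f) (hg : Continuous g)
    (hfi : Integrable f) (hgi : Integrable g) (hf0 : ∀ y, 0 ≤ f y) (hg0 : ∀ y, 0 ≤ g y)
    (s T L U : ℝ) (M : ℕ) (r : ℕ → ℝ) (hs : 0 < s) (hLU : L ≤ U) (hU : U ≤ s * T)
    (hM : s * (T - M) < L)
    (hr : ∀ d : ℕ, L ≤ s * (T - d) → s * (T - d) ≤ U → ∀ y, s * (T - d) ≤ y →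
      y ≤ s * (T - d) + s → |r d - f y| ≤ g y) :
    |s * (∑ d ∈ Finset.range M, if L ≤ s * (T - d) ∧ s * (T - d) ≤ U then r d else 0) -
      ∫ y in Set.Ioi L, f y| ≤ (∫ y in Set.Ioi L, g y) +
        ((∫ y in Set.Ioi L, f y) - ∫ y in Set.Ioi (L + s), f y) + ∫ y in Set.Ioi U, f y := by
  set lo := ⌈T - U / s⌉₊ with hlo
  set hi := ⌊T - L / s⌋₊ + 1 with hhi
  have hTU : 0 ≤ T - U / s := by
    have : U / s ≤ T := by rw [div_le_iff₀ hs]; linarith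
    linarith
  have hULs : L / s ≤ U / s := by gcongr
  have hTL : 0 ≤ T - L / s := by linarith
  have conv1 : ∀ d : ℕ, L ≤ s * (T - d) ↔ (d : ℝ) ≤ T - L / s := by
    intro d
    rw [le_sub_comm, div_le_iff₀ hs, mul_comm]
  have conv2 : ∀ d : ℕ, s * (T - d) ≤ U ↔ T - U / s ≤ (d : ℝ) := by
    intro d
    rw [sub_le_comm, le_div_iff₀ hs, mul_comm]
  have hfilt : (Finset.range M).filter (fun d : ℕ => L ≤ s * (T - d) ∧ s * (T - d) ≤ U) =
      Finset.Ico lo hi := by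
    ext d
    simp only [Finset.mem_filter, Finset.mem_range, Finset.mem_Ico, conv1, conv2]
    rw [hlo, hhi, Nat.ceil_le, Nat.lt_add_one_iff, Nat.le_floor_iff hTL]
    constructor
    · rintro ⟨_, h1, h2⟩; exact ⟨h2, h1⟩
    · rintro ⟨h1, h2⟩
      refine ⟨?_, h2, h1⟩
      by_contra hcon
      push Not at hcon
      have h3 : (M : ℝ) ≤ d := by exact_mod_cast hcon
      have h4 := (conv1 M).mpr (h3.trans h2)
      linarith
  rw [← Finset.sum_filter, hfilt]
  have hlohi : lo ≤ hi := by
    rw [hlo, Nat.ceil_le, hhi]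
    push_cast
    have := Nat.lt_floor_add_one (T - L / s)
    linarith
  set c : ℕ → ℝ := fun d => s * (T - d) + s with hc
  have hcs : ∀ d, c (d + 1) = s * (T - d) := by intro d; simp only [hc]; push_cast; ring
  have hcd : ∀ d, c (d + 1) ≤ c d := by intro d; rw [hcs]; simp only [hc]; linarith
  -- endpoints
  have hlo1 : U ≤ c lo := by
    have := Nat.ceil_lt_add_one hTU
    rw [← hlo] at this
    simp only [hc]
    have h2 : U / s < T - lo + 1 := by linarith
    rw [div_lt_iff₀ hs] at h2
    linarith
  have hhi1 : L ≤ c hi := by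
    rw [hhi, hcs, conv1]; exact Nat.floor_le hTL
  have hhi2 : c hi ≤ L + s := by
    rw [hhi, hcs]
    have := Nat.lt_floor_add_one (T - L / s)
    have h2 : T - ⌊T - L / s⌋₊ ≤ L / s + 1 := by linarith
    calc s * (T - ⌊T - L / s⌋₊) ≤ s * (L / s + 1) := by gcongr
      _ = L + s := by field_simp
  have hchilo : c hi ≤ c lo := by
    simp only [hc]
    have : (lo : ℝ) ≤ hi := by exact_mod_cast hlohi
    nlinarith
  have hsumint : ∀ φ : ℝ → ℝ, Continuous φ →
      ∑ d ∈ Finset.Ico lo hi, ∫ y in c (d + 1)..c d, φ y = ∫ y in c hi..c lo, φ y := by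
    intro φ hφ
    have := intervalIntegral.sum_integral_adjacent_intervals_Ico (f := φ) (a := c) (μ := volume)
      hlohi (fun k _ => hφ.intervalIntegrable _ _)
    rw [intervalIntegral.integral_symm (c lo), ← this, ← Finset.sum_neg_distrib]
    refine Finset.sum_congr rfl fun d _ => ?_
    rw [intervalIntegral.integral_symm]
  have hval : ∀ φ : ℝ → ℝ, Integrable φ → ∀ x y : ℝ, x ≤ y →
      ∫ t in x..y, φ t = (∫ t in Set.Ioi x, φ t) - ∫ t in Set.Ioi y, φ t := by
    intro φ hφ x y hxy
    rw [intervalIntegral.integral_Ioi_sub_Ioi hφ.integrableOn hxy]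
  have hanti : ∀ φ : ℝ → ℝ, Integrable φ → (∀ y, 0 ≤ φ y) → ∀ x y : ℝ, x ≤ y →
      (∫ t in Set.Ioi y, φ t) ≤ ∫ t in Set.Ioi x, φ t := by
    intro φ hφ h0 x y hxy
    exact setIntegral_mono_set hφ.integrableOn (Filter.Eventually.of_forall h0)
      (Set.Ioi_subset_Ioi hxy).eventuallyLE
  have hnn : ∀ φ : ℝ → ℝ, (∀ y, 0 ≤ φ y) → ∀ x : ℝ, 0 ≤ ∫ t in Set.Ioi x, φ t :=
    fun φ h0 x => setIntegral_nonneg measurableSet_Ioi fun y _ => h0 y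
  have hE : |s * (∑ d ∈ Finset.Ico lo hi, r d) - ∫ y in c hi..c lo, f y| ≤
      ∫ y in c hi..c lo, g y := by
    rw [← hsumint f hf, ← hsumint g hg, Finset.mul_sum, ← Finset.sum_sub_distrib]
    refine (Finset.abs_sum_le_sum_abs _ _).trans (Finset.sum_le_sum fun d hd => ?_)
    rw [Finset.mem_Ico] at hd
    have hd1 : L ≤ s * (T - d) := by
      rw [conv1]; rw [hhi, Nat.lt_add_one_iff, Nat.le_floor_iff hTL] at hd; exact hd.2
    have hd2 : s * (T - d) ≤ U := by
      rw [conv2]; rw [hlo, Nat.ceil_le] at hd; exact hd.1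
    have e1 : s * r d = ∫ y in c (d + 1)..c d, r d := by
      rw [intervalIntegral.integral_const, hcs]; simp only [hc, smul_eq_mul]; ring
    rw [e1, ← intervalIntegral.integral_sub (by simp) (hf.intervalIntegrable _ _)]
    refine (intervalIntegral.abs_integral_le_integral_abs (hcd d)).trans ?_
    apply intervalIntegral.integral_mono_on (hcd d)
    · exact (Continuous.abs (by fun_prop)).intervalIntegrable _ _
    · exact hg.intervalIntegrable _ _
    · intro y hy
      rw [hcs] at hy
      exact hr d hd1 hd2 y hy.1 hy.2
  rw [hval f hfi _ _ hchilo, hval g hgi _ _ hchilo] at hE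
  have k1 := hanti f hfi hf0 _ _ hlo1
  have k2 := hanti f hfi hf0 _ _ hhi1
  have k3 := hanti f hfi hf0 _ _ hhi2
  have k4 := hanti g hgi hg0 _ _ hhi1
  have k5 := hnn g hg0 (c lo)
  have k6 := hnn f hf0 (c lo)
  rw [abs_le] at hE ⊢
  constructor <;> linarith [hE.1, hE.2]


lemma abs_exp_sub_one_le' (θ : ℝ) : |Real.exp θ - 1| ≤ |θ| * Real.exp |θ| := by
  have h1 := Real.add_one_le_exp θ
  have h2 := Real.add_one_le_exp (-θ)
  have h3 : Real.exp θ * Real.exp (-θ) = 1 := by rw [← Real.exp_add]; simp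
  have h4 := Real.exp_pos θ
  have h5 : Real.exp θ ≤ Real.exp |θ| := Real.exp_le_exp.mpr (le_abs_self _)
  have h6 : 1 ≤ Real.exp |θ| := Real.one_le_exp (abs_nonneg _)
  have h7 := abs_nonneg θ
  have h8 := le_abs_self θ
  have h9 := neg_abs_le θ
  rw [abs_le]
  constructor
  · nlinarith
  · have : Real.exp θ - 1 ≤ θ * Real.exp θ := by nlinarith
    nlinarith

lemma cell_est (κ C : ℝ) (a : ℕ) (ha2 : 2 ≤ a) (hκ : 0 < κ) (hC : 0 < C) :
    ∃ C', 0 < C' ∧ ∀ Z s ρ x y : ℝ, 1 ≤ Z → 0 < s → s ≤ 2 / Z ^ (a + 1) → 0 < ρ → |x| ≤ 2 * Z →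
      x ≤ y → y ≤ x + s → |Real.log ρ + κ * x ^ a| ≤ C * (1 + |x|) ^ (a + 1) / Z ^ (a + 1) →
      |ρ - lf κ a y| ≤ C' / Z ^ (a + 1) * ((1 + |y|) ^ (a + 1) * lf κ a y) := by
  set B : ℝ := 3 ^ (a + 1) * (C + 2 * a * κ) with hB
  have hB0 : 0 < B := by positivity
  refine ⟨B * Real.exp (B * 5 ^ (a + 1)), by positivity, ?_⟩
  intro Z s ρ x y hZ hs hs2 hρ hx hxy hys hlog
  have hν1 : 1 ≤ Z ^ (a + 1) := one_le_pow₀ hZ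
  have hZν : Z ≤ Z ^ (a + 1) := le_self_pow₀ hZ (by omega)
  set ν := Z ^ (a + 1) with hν
  have hν0 : 0 < ν := by linarith
  have hs3 : s ≤ 2 := hs2.trans (div_le_self (by norm_num) hν1)
  have hdist : |y - x| ≤ 2 / ν := by
    rw [abs_of_nonneg (by linarith)]; linarith
  have hdist2 : |y - x| ≤ 2 := by
    rw [abs_of_nonneg (by linarith)]; linarith
  have hxy1 : |x| ≤ |y| + 2 := by
    have := abs_sub_abs_le_abs_sub x y
    rw [abs_sub_comm] at this; linarith
  have hyx1 : |y| ≤ |x| + 2 := by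
    have := abs_sub_abs_le_abs_sub y x
    linarith
  have hy0 := abs_nonneg y
  set Q := (1 + |y|) ^ (a + 1) with hQ
  have hQ0 : 0 < Q := by positivity
  have t1 : (1 + |x|) ^ (a + 1) ≤ 3 ^ (a + 1) * Q := by
    rw [hQ, ← mul_pow]; gcongr; linarith
  have t2 : |y ^ a - x ^ a| ≤ 2 / ν * a * (3 ^ (a + 1) * Q) := by
    refine (abs_pow_sub_pow_le y x a).trans ?_
    have : max |y| |x| ≤ 3 * (1 + |y|) := max_le (by linarith) (by linarith)
    have h3 : max |y| |x| ^ (a - 1) ≤ 3 ^ (a + 1) * Q := by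
      calc max |y| |x| ^ (a - 1) ≤ (3 * (1 + |y|)) ^ (a - 1) := by gcongr
        _ ≤ (3 * (1 + |y|)) ^ (a + 1) := pow_le_pow_right₀ (by linarith) (by omega)
        _ = _ := by rw [mul_pow]
    gcongr
  set θ := Real.log ρ + κ * y ^ a with hθ
  have hθ1 : |θ| ≤ B * Q / ν := by
    have : θ = (Real.log ρ + κ * x ^ a) + κ * (y ^ a - x ^ a) := by rw [hθ]; ring
    rw [this]
    refine (abs_add_le _ _).trans ?_
    rw [abs_mul, abs_of_pos hκ]
    calc |Real.log ρ + κ * x ^ a| + κ * |y ^ a - x ^ a|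
        ≤ C * (3 ^ (a + 1) * Q) / ν + κ * (2 / ν * a * (3 ^ (a + 1) * Q)) := by
          gcongr
          refine hlog.trans ?_
          gcongr
      _ = B * Q / ν := by rw [hB]; field_simp
  have hθ2 : |θ| ≤ B * 5 ^ (a + 1) := by
    refine hθ1.trans ?_
    rw [div_le_iff₀ hν0]
    have : Q ≤ 5 ^ (a + 1) * ν := by
      rw [hQ, hν, ← mul_pow]; gcongr; linarith
    calc B * Q ≤ B * (5 ^ (a + 1) * ν) := by gcongr
      _ = _ := by ring
  have hρ' : ρ = Real.exp θ * lf κ a y := by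
    unfold lf
    rw [hθ, ← Real.exp_add, add_neg_cancel_right, Real.exp_log hρ]
  have hl := lf_pos κ a y
  have : ρ - lf κ a y = (Real.exp θ - 1) * lf κ a y := by rw [hρ']; ring
  rw [this, abs_mul, abs_of_pos hl]
  have e1 := abs_exp_sub_one_le' θ
  have e2 : |θ| * Real.exp |θ| ≤ B * Q / ν * Real.exp (B * 5 ^ (a + 1)) := by gcongr
  calc |Real.exp θ - 1| * lf κ a y ≤ (B * Q / ν * Real.exp (B * 5 ^ (a + 1))) * lf κ a y := by
        gcongr; exact e1.trans e2
    _ = _ := by ring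

lemma core_sums (J h m₀ κ : ℝ) (a : ℕ) (ha : Even a) (ha2 : 2 ≤ a) (H : LapHyp J h m₀ κ a) :
    ∃ C Z0 : ℝ, 0 < C ∧ 1 ≤ Z0 ∧ ∀ (n : ℕ) (Z : ℝ), Z0 ≤ Z → (n : ℝ) = Z ^ (a * (a + 1)) →
      ∃ (r : ℕ → ℝ) (W : ℝ), 0 < W ∧ (∀ d, mdW J h n d = W * r d) ∧ (∀ d, 0 < r d) ∧
      (∀ L : ℝ, -(2 * Z) ≤ L → L ≤ 2 * Z →
        |(2 * Z ^ (a + 1) / n) * (∑ d ∈ Finset.range (n / 2 + 1),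
          if L ≤ Z ^ (a + 1) * (mdm n d - m₀) ∧ Z ^ (a + 1) * (mdm n d - m₀) ≤ 2 * Z
            then r d else 0) - lI κ a L| ≤
          C / Z ^ (a + 1) * (∫ y in Set.Ioi L, (1 + |y|) ^ (a + 1) * lf κ a y) +
          (lI κ a L - lI κ a (L + 2 * Z ^ (a + 1) / n)) + lI κ a (2 * Z)) ∧
      (∀ d ∈ Finset.range (n / 2 + 1), 2 * Z < |Z ^ (a + 1) * (mdm n d - m₀)| →
        r d ≤ C * (n : ℝ) ^ 4 * Real.exp (-(2 * κ * Z ^ a))) := by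
  obtain ⟨C, Z0, hC, hZ0, hmain⟩ := lap_est J h m₀ κ a ha ha2 H
  obtain ⟨hJ, hκ, h0, h1, -, -⟩ := H
  obtain ⟨C', hC', hcell⟩ := cell_est κ C a ha2 hκ hC
  have h1' : 0 < 1 - m₀ := by linarith
  have p1 : 0 < 2 / m₀ := by positivity
  have p2 : 0 < 2 / (1 - m₀) := by positivity
  refine ⟨C + C', Z0 + 2 / m₀ + 2 / (1 - m₀), by positivity, by linarith, ?_⟩
  intro n Z hZ hnZ
  obtain ⟨r, W, hW, hWr, hr, hloc, htail⟩ := hmain n Z (by linarith) hnZ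
  have hZ1 : 1 ≤ Z := by linarith
  have hZpos : 0 < Z := by linarith
  have hn0 : (0 : ℝ) < n := by rw [hnZ]; positivity
  have hZa : Z ≤ Z ^ a := le_self_pow₀ hZ1 (by omega)
  have hνe : Z ^ (a + 1) = Z ^ a * Z := pow_succ _ _
  have hν0 : 0 < Z ^ (a + 1) := by positivity
  have hnν : (Z ^ (a + 1)) ^ 2 ≤ n := by
    rw [hnZ, ← pow_mul]; exact pow_le_pow_right₀ hZ1 (by nlinarith)
  refine ⟨r, W, hW, hWr, hr, ?_, ?_⟩
  · intro L hL1 hL2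
    set ν := Z ^ (a + 1) with hν
    have hs : 0 < 2 * ν / n := by positivity
    have hs2 : 2 * ν / n ≤ 2 / ν := by
      rw [div_le_div_iff₀ hn0 hν0]; nlinarith
    have hy : ∀ d : ℕ, ν * (mdm n d - m₀) = 2 * ν / n * (n * (1 - m₀) / 2 - d) := by
      intro d; unfold mdm; field_simp; ring
    have b1 : 2 ≤ Z ^ a * m₀ := by
      rw [← div_le_iff₀ h0]; linarith
    have b2 : 2 ≤ Z ^ a * (1 - m₀) := by
      rw [← div_le_iff₀ h1']; linarith
    simp only [hy]
    have key := riemann_cmp (lf κ a) (fun y => (C + C') / ν * ((1 + |y|) ^ (a + 1) * lf κ a y))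
      (continuous_lf κ a) (by have := continuous_lf κ a; fun_prop)
      (integrable_lf κ a ha ha2 hκ) ((integrable_q_lf κ a ha ha2 hκ (a + 1)).const_mul _)
      (fun y => (lf_pos κ a y).le) (fun y => by have := lf_pos κ a y; positivity)
      (2 * ν / n) (n * (1 - m₀) / 2) L (2 * Z) (n / 2 + 1) r hs hL2 ?_ ?_ ?_
    · rw [integral_const_mul] at key
      exact key
    · have : 2 * ν / n * (n * (1 - m₀) / 2) = ν * (1 - m₀) := by field_simp
      rw [this, hνe]; nlinarith
    · have hM : (n : ℝ) / 2 < ((n / 2 + 1 : ℕ) : ℝ) := by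
        have : n < 2 * (n / 2 + 1) := by omega
        have : (n : ℝ) < 2 * ((n / 2 + 1 : ℕ) : ℝ) := by exact_mod_cast this
        linarith
      have : 2 * ν / n * (n * (1 - m₀) / 2 - ((n / 2 + 1 : ℕ) : ℝ)) <
          2 * ν / n * (n * (1 - m₀) / 2 - (n : ℝ) / 2) := by
        apply mul_lt_mul_of_pos_left _ hs; linarith
      have h2 : 2 * ν / n * (n * (1 - m₀) / 2 - (n : ℝ) / 2) = - (ν * m₀) := by field_simp; ring
      rw [h2] at this
      have : 2 * Z ≤ ν * m₀ := by rw [hνe]; nlinarith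
      linarith
    · intro d hd1 hd2 y hy1 hy2
      have hx : |2 * ν / n * (n * (1 - m₀) / 2 - (d : ℝ))| ≤ 2 * Z := by
        rw [abs_le]; constructor <;> linarith
      have hl := hloc d (by rw [hy]; exact hx)
      rw [hy] at hl
      refine (hcell Z _ (r d) _ y hZ1 hs hs2 (hr d) hx hy1 hy2 hl).trans ?_
      have := lf_pos κ a y
      gcongr
      linarith
  · intro d hd hd2
    rw [Finset.mem_range] at hd
    refine (htail d (by omega) hd2).trans ?_
    gcongr
    linarith


/-- polynomial versus exponential -/
lemma pow_mul_exp_le (κ : ℝ) (hκ : 0 < κ) (p : ℕ) (Z : ℝ) (hZ : 0 ≤ Z) :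
    Z ^ p * Real.exp (-(κ * Z)) ≤ p.factorial / κ ^ p := by
  have h := Real.pow_div_factorial_le_exp (κ * Z) (by positivity) p
  have hf : (0 : ℝ) < p.factorial := by positivity
  rw [div_le_iff₀ hf, mul_pow] at h
  rw [le_div_iff₀ (by positivity), Real.exp_neg]
  have he := Real.exp_pos (κ * Z)
  rw [mul_comm (Z ^ p), mul_assoc, inv_mul_le_iff₀ he]
  linarith

/-- The error terms of size `n^5 exp(-2κ Z^a)` are negligible. -/
lemma small_err (κ : ℝ) (a : ℕ) (ha : Even a) (ha2 : 2 ≤ a) (hκ : 0 < κ) :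
    ∃ K, 0 < K ∧ ∀ Z z : ℝ, 1 ≤ Z → 0 ≤ z → z ≤ Z →
      (Z ^ (a * (a + 1))) ^ 5 * Real.exp (-(2 * κ * Z ^ a)) ≤ K / Z ^ (a + 1) * lI κ a z := by
  obtain ⟨K, hK, hlow⟩ := lI_lower κ a ha ha2 hκ
  set p := (a * (a + 1)) * 5 + (a + 1) + (a - 1) with hp
  refine ⟨K * 2 ^ (a - 1) * (p.factorial / κ ^ p), by positivity, ?_⟩
  intro Z z hZ hz hzZ
  have hZ0 : 0 < Z := by linarith
  have hν : 0 < Z ^ (a + 1) := by positivity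
  have h1 := hlow Z hZ0.le
  have h2 := lI_anti κ a ha ha2 hκ z Z hzZ
  have hI := lI_pos κ a ha ha2 hκ z hz
  have hIZ := lI_pos κ a ha ha2 hκ Z hZ0.le
  have h3 := pow_mul_exp_le κ hκ p Z hZ0.le
  have h4 : Real.exp (-(κ * Z ^ a)) ≤ Real.exp (-(κ * Z)) := by
    apply Real.exp_le_exp.mpr
    have : Z ≤ Z ^ a := le_self_pow₀ hZ (by omega)
    have : κ * Z ≤ κ * Z ^ a := by gcongr
    linarith
  have h5 : Real.exp (-(2 * κ * Z ^ a)) = Real.exp (-(κ * Z ^ a)) * lf κ a Z := by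
    unfold lf; rw [← Real.exp_add]; congr 1; ring
  have h6 : (1 + Z) ^ (a - 1) ≤ 2 ^ (a - 1) * Z ^ (a - 1) := by
    rw [← mul_pow]; gcongr; linarith
  rw [div_mul_eq_mul_div, le_div_iff₀ hν, h5]
  calc (Z ^ (a * (a + 1))) ^ 5 * (Real.exp (-(κ * Z ^ a)) * lf κ a Z) * Z ^ (a + 1)
      ≤ (Z ^ (a * (a + 1))) ^ 5 * (Real.exp (-(κ * Z)) *
          (K * (2 ^ (a - 1) * Z ^ (a - 1)) * lI κ a z)) * Z ^ (a + 1) := by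
        have hl0 := (lf_pos κ a Z).le
        have hl1 : lf κ a Z ≤ K * (2 ^ (a - 1) * Z ^ (a - 1)) * lI κ a z := by
          refine h1.trans ?_
          gcongr
        gcongr
    _ = K * 2 ^ (a - 1) * (Z ^ p * Real.exp (-(κ * Z))) * lI κ a z := by
        have : Z ^ p = (Z ^ (a * (a + 1))) ^ 5 * Z ^ (a + 1) * Z ^ (a - 1) := by
          rw [hp, pow_add Z _ (a - 1), pow_add Z _ (a + 1), pow_mul Z (a * (a + 1)) 5]
        rw [this]; ring
    _ ≤ _ := by gcongr

lemma lI_step (κ : ℝ) (a : ℕ) (ha : Even a) (ha2 : 2 ≤ a) (hκ : 0 < κ) (L s B : ℝ) (hs : 0 ≤ s)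
    (hB : ∀ y, L ≤ y → lf κ a y ≤ B) : lI κ a L - lI κ a (L + s) ≤ s * B := by
  have hInteg := integrable_lf κ a ha ha2 hκ
  have hls : L ≤ L + s := by linarith
  have h1 := intervalIntegral.integral_Ioi_sub_Ioi (hInteg.integrableOn (s := Set.Ioi L)) hls
  unfold lI
  rw [h1]
  calc ∫ y in L..(L + s), lf κ a y ≤ ∫ y in L..(L + s), B := by
        apply intervalIntegral.integral_mono_on hls
          ((continuous_lf κ a).intervalIntegrable _ _) (by simp)
        intro y hy; exact hB y hy.1
    _ = s * B := by simp

lemma tail_sum (M : ℕ) (r : ℕ → ℝ) (P Q : ℕ → Prop) [DecidablePred P] [DecidablePred Q]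
    (B : ℝ) (hB : 0 ≤ B) (hr : ∀ d, 0 < r d) (hQP : ∀ d, Q d → P d)
    (h : ∀ d ∈ Finset.range M, P d → ¬ Q d → r d ≤ B) :
    |(∑ d ∈ Finset.range M, if P d then r d else 0) -
      ∑ d ∈ Finset.range M, if Q d then r d else 0| ≤ M * B := by
  rw [← Finset.sum_sub_distrib]
  refine (Finset.abs_sum_le_sum_abs _ _).trans ?_
  calc ∑ d ∈ Finset.range M, |(if P d then r d else 0) - if Q d then r d else 0|
      ≤ ∑ d ∈ Finset.range M, B := by
        refine Finset.sum_le_sum fun d hd => ?_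
        by_cases hQ : Q d
        · simp [hQ, hQP d hQ, hB]
        · by_cases hP : P d
          · simp only [hP, hQ, if_true, if_false, sub_zero, abs_of_pos (hr d)]
            exact h d hd hP hQ
          · simp [hP, hQ, hB]
    _ = M * B := by simp

lemma ratio_est (x y X Y e1 e2 : ℝ) (hX : 0 < X) (hY : 0 < Y)
    (h1 : |x - X| ≤ e1 * X) (h2 : |y - Y| ≤ e2 * Y) (he : e2 ≤ 1 / 2) :
    |(x / y) / (X / Y) - 1| ≤ 2 * (e1 + e2) := by
  have h2' := abs_le.mp h2
  have hy : Y / 2 ≤ y := by nlinarith [h2'.1]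
  have hy0 : 0 < y := by linarith
  have : (x / y) / (X / Y) - 1 = (x * Y - y * X) / (y * X) := by field_simp
  rw [this, abs_div, abs_of_pos (mul_pos hy0 hX), div_le_iff₀ (mul_pos hy0 hX)]
  have h3 : x * Y - y * X = (x - X) * Y - (y - Y) * X := by ring
  rw [h3]
  have h4 : |(x - X) * Y - (y - Y) * X| ≤ |x - X| * Y + |y - Y| * X := by
    refine (abs_sub _ _).trans ?_
    rw [abs_mul, abs_mul, abs_of_pos hX, abs_of_pos hY]
  have e1' : 0 ≤ e1 := by
    by_contra hc; push Not at hc; nlinarith [abs_nonneg (x - X)]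
  have e2' : 0 ≤ e2 := by
    by_contra hc; push Not at hc; nlinarith [abs_nonneg (y - Y)]
  have h5 : |x - X| * Y + |y - Y| * X ≤ (e1 + e2) * (X * Y) := by nlinarith
  have h6 : (e1 + e2) * (X * Y) ≤ 2 * (e1 + e2) * (y * X) := by
    have : X * Y ≤ 2 * (y * X) := by nlinarith
    nlinarith
  linarith

set_option maxHeartbeats 1000000 in
lemma core (J h m₀ κ : ℝ) (a : ℕ) (ha : Even a) (ha2 : 2 ≤ a) (H : LapHyp J h m₀ κ a) :
    ∃ C Z0 : ℝ, 0 < C ∧ 1 ≤ Z0 ∧ ∀ (n : ℕ) (Z : ℝ), Z0 ≤ Z → (n : ℝ) = Z ^ (a * (a + 1)) →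
      ∀ z, 0 ≤ z → z ≤ Z →
      |mdProb J h n {σ | z ≤ Z ^ (a + 1) * (mdens σ - m₀)} / (lI κ a z / ∫ y, lf κ a y) - 1| ≤
        C * (1 + z) ^ (a + 1) / Z ^ (a + 1) := by
  classical
  obtain ⟨C, Z0, hC, hZ0, hmain⟩ := core_sums J h m₀ κ a ha ha2 H
  have hκ : 0 < κ := H.2.1
  obtain ⟨K1, hK1, hq⟩ := lI_qmoment κ a ha ha2 hκ
  obtain ⟨K2, hK2, hlow⟩ := lI_lower κ a ha ha2 hκ
  obtain ⟨K3, hK3, htl⟩ := lI_tail κ a ha ha2 hκ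
  obtain ⟨K4, hK4, hsm⟩ := small_err κ a ha ha2 hκ
  set I := ∫ y, lf κ a y with hI
  have hInteg := integrable_lf κ a ha ha2 hκ
  have hI0 : lI κ a 0 ≤ I :=
    setIntegral_le_integral hInteg (Filter.Eventually.of_forall fun y => (lf_pos _ a y).le)
  have hIpos : 0 < I := (lI_pos κ a ha ha2 hκ 0 le_rfl).trans_le hI0
  set Qi := ∫ y, (1 + |y|) ^ (a + 1) * lf κ a y with hQi
  have hqint := integrable_q_lf κ a ha ha2 hκ (a + 1)
  have hq0 : ∀ y, 0 ≤ (1 + |y|) ^ (a + 1) * lf κ a y := fun y => by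
    have := lf_pos κ a y; positivity
  have hQi0 : 0 ≤ Qi := integral_nonneg hq0
  set A1 := C * K1 + 2 * K2 + (K3 + 4 * C) * K4 with hA1
  set A2 := (C * Qi + 2 + (2 * K3 + 4 * C) * K4 * I) / I with hA2
  have hA1p : 0 < A1 := by positivity
  have hA2p : 0 < A2 := by positivity
  refine ⟨2 * (A1 + A2), Z0 + 2 * A2, by positivity, by linarith, ?_⟩
  intro n Z hZ hnZ z hz hzZ
  obtain ⟨r, W, hW, hWr, hr, hmid, htail⟩ := hmain n Z (by linarith) hnZ
  have hZ1 : 1 ≤ Z := by linarith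
  have hZpos : 0 < Z := by linarith
  have hnR : (1 : ℝ) ≤ n := by rw [hnZ]; exact one_le_pow₀ hZ1
  have hn0 : (0 : ℝ) < n := by linarith
  have hnν : (Z ^ (a + 1)) ^ 2 ≤ n := by
    rw [hnZ, ← pow_mul]; exact pow_le_pow_right₀ hZ1 (by nlinarith)
  have hνZ : Z ≤ Z ^ (a + 1) := le_self_pow₀ hZ1 (by omega)
  have sm1 := hsm Z z hZ1 hz hzZ
  have sm0 := hsm Z 0 hZ1 le_rfl hZpos.le
  rw [← hnZ] at sm1 sm0
  have htl' := htl Z hZpos.le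
  set ν := Z ^ (a + 1) with hν
  have hν1 : 1 ≤ ν := by linarith
  have hν0 : 0 < ν := by linarith
  set s := 2 * ν / n with hs
  have hs0 : 0 < s := by positivity
  have hs2 : s ≤ 2 / ν := by
    rw [hs, div_le_div_iff₀ hn0 hν0]; nlinarith
  set E := (n : ℝ) ^ 5 * Real.exp (-(2 * κ * Z ^ a)) with hE
  have hE0 : 0 < E := by positivity
  have hlI2 : lI κ a (2 * Z) ≤ K3 * E := by
    refine htl'.trans ?_
    have : (1 : ℝ) ≤ (n : ℝ) ^ 5 := one_le_pow₀ hnR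
    have he := Real.exp_pos (-(2 * κ * Z ^ a))
    rw [hE]
    gcongr
    nlinarith
  -- tails
  have hsM : s * (((n / 2 + 1 : ℕ) : ℝ) * (C * (n : ℝ) ^ 4 * Real.exp (-(2 * κ * Z ^ a)))) ≤
      4 * C * E := by
    have h1 : ((n / 2 + 1 : ℕ) : ℝ) ≤ 2 * n := by
      have : 1 ≤ n := by exact_mod_cast hnR
      have : n / 2 + 1 ≤ 2 * n := by omega
      exact_mod_cast this
    have h2 : ν ≤ n := by nlinarith
    calc s * (((n / 2 + 1 : ℕ) : ℝ) * (C * (n : ℝ) ^ 4 * Real.exp (-(2 * κ * Z ^ a))))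
        ≤ s * ((2 * n) * (C * (n : ℝ) ^ 4 * Real.exp (-(2 * κ * Z ^ a)))) := by gcongr
      _ = 4 * C * (ν * (n : ℝ) ^ 4 * Real.exp (-(2 * κ * Z ^ a))) := by
          rw [hs]; field_simp; ring
      _ ≤ 4 * C * (n * (n : ℝ) ^ 4 * Real.exp (-(2 * κ * Z ^ a))) := by gcongr
      _ = 4 * C * E := by rw [hE]; ring
  have hB0 : 0 ≤ C * (n : ℝ) ^ 4 * Real.exp (-(2 * κ * Z ^ a)) := by positivity
  set Sz := ∑ d ∈ Finset.range (n / 2 + 1), if z ≤ ν * (mdm n d - m₀) then r d else 0 with hSz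
  set St := ∑ d ∈ Finset.range (n / 2 + 1), if True then r d else 0 with hSt
  have hlIz := lI_pos κ a ha ha2 hκ z hz
  -- numerator
  have hnum : |s * Sz - lI κ a z| ≤ (A1 / ν * (1 + z) ^ (a + 1)) * lI κ a z := by
    have t1 := hmid z (by linarith) (by linarith)
    have t2 := tail_sum (n / 2 + 1) r (fun d => z ≤ ν * (mdm n d - m₀))
      (fun d => z ≤ ν * (mdm n d - m₀) ∧ ν * (mdm n d - m₀) ≤ 2 * Z) _ hB0 hr
      (fun d hd => hd.1) (fun d hd hP hQ => htail d hd (by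
        by_contra hcon
        push Not at hcon
        exact hQ ⟨hP, (le_abs_self _).trans hcon⟩))
    set Sm := ∑ d ∈ Finset.range (n / 2 + 1),
      if z ≤ ν * (mdm n d - m₀) ∧ ν * (mdm n d - m₀) ≤ 2 * Z then r d else 0 with hSm
    have t3 : |s * Sz - s * Sm| ≤ 4 * C * E := by
      rw [← mul_sub, abs_mul, abs_of_pos hs0]
      exact (mul_le_mul_of_nonneg_left t2 hs0.le).trans hsM
    have t4 := lI_step κ a ha ha2 hκ z s (lf κ a z) hs0.le
      (fun y hy => lf_anti κ a hκ z y hz hy)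
    have t5 := hlow z hz
    have t6 := hq z hz
    have t7 := abs_sub_le (s * Sz) (s * Sm) (lI κ a z)
    have u1 : (1 + z) ^ (a - 1) ≤ (1 + z) ^ (a + 1) :=
      pow_le_pow_right₀ (by linarith) (by omega)
    have u2 : (1 : ℝ) ≤ (1 + z) ^ (a + 1) := one_le_pow₀ (by linarith)
    set q := (1 + z) ^ (a + 1) with hqdef
    have v1 : C / ν * (∫ y in Set.Ioi z, (1 + |y|) ^ (a + 1) * lf κ a y) ≤
        C / ν * (K1 * q * lI κ a z) := by gcongr
    have v2 : s * lf κ a z ≤ 2 / ν * (K2 * q * lI κ a z) := by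
      have : lf κ a z ≤ K2 * q * lI κ a z := t5.trans (by gcongr)
      have hl := (lf_pos κ a z).le
      gcongr
    have v3 : E ≤ K4 / ν * (q * lI κ a z) := by
      refine sm1.trans ?_
      gcongr
      nlinarith
    have v4 : (K3 + 4 * C) * E ≤ (K3 + 4 * C) * (K4 / ν * (q * lI κ a z)) := by gcongr
    have v5 : A1 / ν * q * lI κ a z = C / ν * (K1 * q * lI κ a z) +
        2 / ν * (K2 * q * lI κ a z) + (K3 + 4 * C) * (K4 / ν * (q * lI κ a z)) := by
      rw [hA1]; field_simp
    rw [v5]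
    linarith
  -- denominator
  have hden : |s * St - I| ≤ (A2 / ν) * I := by
    have t1 := hmid (-(2 * Z)) le_rfl (by linarith)
    have t2 := tail_sum (n / 2 + 1) r (fun d => True)
      (fun d => -(2 * Z) ≤ ν * (mdm n d - m₀) ∧ ν * (mdm n d - m₀) ≤ 2 * Z) _ hB0 hr
      (fun d hd => trivial) (fun d hd hP hQ => htail d hd (by
        by_contra hcon
        push Not at hcon
        exact hQ (abs_le.mp hcon)))
    set Sm := ∑ d ∈ Finset.range (n / 2 + 1),
      if -(2 * Z) ≤ ν * (mdm n d - m₀) ∧ ν * (mdm n d - m₀) ≤ 2 * Z then r d else 0 with hSm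
    have t3 : |s * St - s * Sm| ≤ 4 * C * E := by
      rw [← mul_sub, abs_mul, abs_of_pos hs0]
      exact (mul_le_mul_of_nonneg_left t2 hs0.le).trans hsM
    have t4 := lI_step κ a ha ha2 hκ (-(2 * Z)) s 1 hs0.le
      (fun y hy => lf_le_one κ a ha hκ y)
    have t5 := lI_neg κ a ha ha2 hκ (2 * Z)
    rw [← hI] at t5
    have t6 : (∫ y in Set.Ioi (-(2 * Z)), (1 + |y|) ^ (a + 1) * lf κ a y) ≤ Qi :=
      setIntegral_le_integral hqint (Filter.Eventually.of_forall hq0)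
    have t7 := abs_sub_le (s * St) (s * Sm) (lI κ a (-(2 * Z)))
    have t8 := abs_sub_le (s * St) (lI κ a (-(2 * Z))) I
    have t9 : |lI κ a (-(2 * Z)) - I| = lI κ a (2 * Z) := by
      rw [t5, sub_sub_cancel_left, abs_neg,
        abs_of_pos (lI_pos κ a ha ha2 hκ (2 * Z) (by linarith))]
    have v1 : C / ν * (∫ y in Set.Ioi (-(2 * Z)), (1 + |y|) ^ (a + 1) * lf κ a y) ≤
        C / ν * Qi := by gcongr
    have v3 : E ≤ K4 / ν * I := by
      refine sm0.trans ?_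
      gcongr
    have v4 : (2 * K3 + 4 * C) * E ≤ (2 * K3 + 4 * C) * (K4 / ν * I) := by gcongr
    have v5 : A2 / ν * I = C / ν * Qi + 2 / ν + (2 * K3 + 4 * C) * (K4 / ν * I) := by
      rw [hA2]; field_simp
    rw [v5]
    linarith
  have hp : mdProb J h n {σ | z ≤ ν * (mdens σ - m₀)} = (s * Sz) / (s * St) := by
    rw [mdProb_eq J h n (fun x => z ≤ ν * (x - m₀)), mul_div_mul_left _ _ hs0.ne']
    have e1 : (∑ d ∈ Finset.range (n / 2 + 1),
        if z ≤ ν * (mdm n d - m₀) then mdW J h n d else 0) = W * Sz := by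
      rw [hSz, Finset.mul_sum]
      refine Finset.sum_congr rfl fun d _ => ?_
      rw [hWr, mul_ite, mul_zero]
    have e2 : (∑ d ∈ Finset.range (n / 2 + 1), mdW J h n d) = W * St := by
      rw [hSt, Finset.mul_sum]
      refine Finset.sum_congr rfl fun d _ => ?_
      rw [hWr, if_pos trivial]
    rw [e1, e2, mul_div_mul_left _ _ hW.ne']
  rw [hp]
  have he2 : A2 / ν ≤ 1 / 2 := by
    rw [div_le_iff₀ hν0]; linarith
  refine (ratio_est _ _ _ _ _ _ hlIz hIpos hnum hden he2).trans ?_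
  have u2 : (1 : ℝ) ≤ (1 + z) ^ (a + 1) := one_le_pow₀ (by linarith)
  have : 2 * (A1 + A2) * (1 + z) ^ (a + 1) / ν =
    2 * (A1 / ν * (1 + z) ^ (a + 1) + A2 / ν * (1 + z) ^ (a + 1)) := by ring
  rw [this]
  have : 0 < A2 / ν := by positivity
  nlinarith


lemma mdProb_mem (J h : ℝ) (n : ℕ) (P : ℝ → Prop) :
    0 ≤ mdProb J h n {σ | P (mdens σ)} ∧ mdProb J h n {σ | P (mdens σ)} ≤ 1 := by
  classical
  rw [mdProb_eq J h n P]
  have hp := mdW_pos J h n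
  have hpos : 0 < ∑ d ∈ Finset.range (n / 2 + 1), mdW J h n d :=
    Finset.sum_pos (fun d _ => hp d) ⟨0, by simp⟩
  constructor
  · apply div_nonneg _ hpos.le
    refine Finset.sum_nonneg fun d _ => ?_
    split_ifs
    · exact (hp d).le
    · exact le_rfl
  · rw [div_le_one hpos]
    refine Finset.sum_le_sum fun d _ => ?_
    split_ifs
    · exact le_rfl
    · exact (hp d).le

lemma core_all (J h m₀ κ : ℝ) (a : ℕ) (ha : Even a) (ha2 : 2 ≤ a) (H : LapHyp J h m₀ κ a) :
    ∃ C : ℝ, 0 < C ∧ ∀ (n : ℕ) (Z : ℝ), 1 ≤ Z → (n : ℝ) = Z ^ (a * (a + 1)) →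
      ∀ z, 0 ≤ z → z ≤ Z →
      |mdProb J h n {σ | z ≤ Z ^ (a + 1) * (mdens σ - m₀)} / (lI κ a z / ∫ y, lf κ a y) - 1| ≤
        C * (1 + z ^ (a + 1)) / Z ^ (a + 1) := by
  obtain ⟨C, Z0, hC, hZ0, hmain⟩ := core J h m₀ κ a ha ha2 H
  have hκ : 0 < κ := H.2.1
  set I := ∫ y, lf κ a y with hI
  have hInteg := integrable_lf κ a ha ha2 hκ
  have hI0 : lI κ a 0 ≤ I :=
    setIntegral_le_integral hInteg (Filter.Eventually.of_forall fun y => (lf_pos _ a y).le)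
  have hIpos : 0 < I := (lI_pos κ a ha ha2 hκ 0 le_rfl).trans_le hI0
  have hZ00 : 0 < Z0 := by linarith
  have hq0 := lI_pos κ a ha ha2 hκ Z0 hZ00.le
  set B := (1 / (lI κ a Z0 / I) + 1) * Z0 ^ (a + 1) with hB
  have hBp : 0 < B := by positivity
  refine ⟨C * 2 ^ a + B, by positivity, ?_⟩
  intro n Z hZ1 hnZ z hz hzZ
  have hZpos : 0 < Z := by linarith
  have hν : 0 < Z ^ (a + 1) := by positivity
  have hzp : 0 ≤ z ^ (a + 1) := by positivity
  rcases le_or_gt Z0 Z with hc | hc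
  · refine (hmain n Z hc hnZ z hz hzZ).trans ?_
    gcongr ?_ / _
    have := q_le (a + 1) z hz
    simp only [Nat.add_sub_cancel] at this
    calc C * (1 + z) ^ (a + 1) ≤ C * (2 ^ a * (1 + z ^ (a + 1))) := by gcongr
      _ ≤ _ := by nlinarith
  · obtain ⟨hp0, hp1⟩ := mdProb_mem J h n (fun x => z ≤ Z ^ (a + 1) * (x - m₀))
    set p := mdProb J h n {σ | z ≤ Z ^ (a + 1) * (mdens σ - m₀)}
    have hlz := lI_pos κ a ha ha2 hκ z hz
    have hQ : lI κ a Z0 / I ≤ lI κ a z / I := by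
      gcongr
      exact lI_anti κ a ha ha2 hκ z Z0 (by linarith)
    have hQp : 0 < lI κ a Z0 / I := by positivity
    have h1 : p / (lI κ a z / I) ≤ 1 / (lI κ a Z0 / I) := by gcongr
    have h2 : 0 ≤ p / (lI κ a z / I) := by positivity
    have h3 : |p / (lI κ a z / I) - 1| ≤ 1 / (lI κ a Z0 / I) + 1 := by
      rw [abs_le]; constructor <;> linarith
    refine h3.trans ?_
    rw [le_div_iff₀ hν]
    calc (1 / (lI κ a Z0 / I) + 1) * Z ^ (a + 1) ≤ B := by rw [hB]; gcongr
      _ ≤ (C * 2 ^ a + B) * (1 + z ^ (a + 1)) := by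
        have : 0 < C * 2 ^ a := by positivity
        nlinarith

lemma rpow_facts (n : ℕ) (hn : 1 ≤ n) (N k : ℕ) (hN : 0 < N) :
    1 ≤ (n : ℝ) ^ ((1 : ℝ) / N) ∧ (n : ℝ) = ((n : ℝ) ^ ((1 : ℝ) / N)) ^ N ∧
    ((n : ℝ) ^ ((1 : ℝ) / N)) ^ k = (n : ℝ) ^ ((k : ℝ) / N) := by
  have hn1 : (1 : ℝ) ≤ n := by exact_mod_cast hn
  have hn0 : (0 : ℝ) ≤ n := by linarith
  refine ⟨Real.one_le_rpow hn1 (by positivity), ?_, ?_⟩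
  · rw [← Real.rpow_natCast, ← Real.rpow_mul hn0]
    rw [one_div, inv_mul_cancel₀ (by positivity), Real.rpow_one]
  · rw [← Real.rpow_natCast, ← Real.rpow_mul hn0]
    congr 1; ring

theorem stmt_6 (J h : ℝ) (hJ : 0 ≤ J) :
    -- Case (i): `(J, h) ∉ Γ ∪ {(J_c, h_c)}`, i.e. `H` has a unique maximizer
    -- `m₀ = g(τ(m₀))` with `H''(m₀) < 0`.
    (∀ m₀ : ℝ,
      (∀ x : ℝ, x ≠ m₀ → mdH J h x < mdH J h m₀) →
      m₀ = mdg (mdtau J h m₀) →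
      iteratedDeriv 2 (mdH J h) m₀ < 0 →
      (J, h) ≠ (Jc, hcrit) →
      ∃ C : ℝ, 0 < C ∧ ∀ n : ℕ, 1 ≤ n → ∀ z : ℝ, 0 ≤ z → z ≤ (n : ℝ) ^ ((1 : ℝ) / 6) →
        |mdProb J h n {σ | z ≤ (n : ℝ) ^ ((1 : ℝ) / 2) * (mdens σ - m₀)} /
            (∫ y in Set.Ioi z,
              Real.exp (-(y ^ 2) /
                  (2 * (-(iteratedDeriv 2 (mdH J h) m₀)⁻¹ - (2 * J)⁻¹))) /
                Real.sqrt (2 * Real.pi *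
                  (-(iteratedDeriv 2 (mdH J h) m₀)⁻¹ - (2 * J)⁻¹))) - 1|
          ≤ C * (n : ℝ) ^ (-(1 : ℝ) / 2) * (1 + z ^ 3)) ∧
    -- Case (ii): `(J, h) = (J_c, h_c)`.
    (J = Jc → h = hcrit →
      ∀ c₁ : ℝ,
        (∫ y : ℝ,
          c₁ * Real.exp (-(-(iteratedDeriv 4 (mdH J h) (2 - Real.sqrt 2)) * y ^ 4) / 24)) = 1 →
        ∃ C : ℝ, 0 < C ∧ ∀ n : ℕ, 1 ≤ n → ∀ z : ℝ, 0 ≤ z → z ≤ (n : ℝ) ^ ((1 : ℝ) / 20) →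
          |mdProb J h n {σ | z ≤ (n : ℝ) ^ ((1 : ℝ) / 4) * (mdens σ - (2 - Real.sqrt 2))} /
              (∫ y in Set.Ici z,
                c₁ * Real.exp (-(-(iteratedDeriv 4 (mdH J h) (2 - Real.sqrt 2)) * y ^ 4) / 24))
            - 1|
            ≤ C * (n : ℝ) ^ (-(1 : ℝ) / 4) * (1 + z ^ 5)) := by
  refine ⟨?_, ?_⟩
  · intro m₀ hmax hfix h2 _
    obtain ⟨hlam, hL⟩ := lapHyp_one J h m₀ hJ hmax hfix h2
    set lam := (-(iteratedDeriv 2 (mdH J h) m₀)⁻¹ - (2 * J)⁻¹) with hlamdef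
    obtain ⟨C, hC, hmain⟩ := core_all J h m₀ (1 / (2 * lam)) 2 (by decide) le_rfl hL
    refine ⟨C, hC, fun n hn z hz hzn => ?_⟩
    obtain ⟨f1, f2, f3⟩ := rpow_facts n hn 6 3 (by norm_num)
    push_cast at f1 f2 f3
    have hm := hmain n _ f1 f2 z hz hzn
    norm_num only [] at hm f3
    have f4 : (3 : ℝ) / 6 = 1 / 2 := by norm_num
    simp only [f3, f4, Nat.reduceAdd] at hm
    have hn0 : (0 : ℝ) ≤ n := by positivity
    have e1 : (∫ y in Set.Ioi z, Real.exp (-(y ^ 2) / (2 * lam)) / Real.sqrt (2 * Real.pi * lam)) =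
        lI (1 / (2 * lam)) 2 z / ∫ y, lf (1 / (2 * lam)) 2 y := by
      have g1 : (∫ y, lf (1 / (2 * lam)) 2 y) = Real.sqrt (2 * Real.pi * lam) := by
        have := integral_gaussian (1 / (2 * lam))
        simp only [lf, neg_mul] at this ⊢
        rw [this]; congr 1; field_simp
      rw [g1, integral_div]
      unfold lI lf
      congr 2
      funext y
      congr 1; ring
    have e2 : C * (n : ℝ) ^ (-(1 : ℝ) / 2) * (1 + z ^ 3) =
        C * (1 + z ^ 3) / (n : ℝ) ^ ((1 : ℝ) / 2) := by
      rw [neg_div, Real.rpow_neg hn0]; ring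
    rw [e1, e2]
    exact hm
  · intro hJc hhc c₁ hc₁
    subst hJc hhc
    have hL := lapHyp_two
    set κ := -(iteratedDeriv 4 (mdH Jc hcrit) (2 - Real.sqrt 2)) / 24 with hκ
    obtain ⟨C, hC, hmain⟩ := core_all Jc hcrit _ κ 4 (by decide) (by norm_num) hL
    refine ⟨C, hC, fun n hn z hz hzn => ?_⟩
    obtain ⟨f1, f2, f3⟩ := rpow_facts n hn 20 5 (by norm_num)
    push_cast at f1 f2 f3
    have hm := hmain n _ f1 f2 z hz hzn
    have f4 : (5 : ℝ) / 20 = 1 / 4 := by norm_num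
    simp only [f3, f4, Nat.reduceAdd] at hm
    have hn0 : (0 : ℝ) ≤ n := by positivity
    have g0 : ∀ y : ℝ, c₁ *
        Real.exp (-(-(iteratedDeriv 4 (mdH Jc hcrit) (2 - Real.sqrt 2)) * y ^ 4) / 24) =
        c₁ * lf κ 4 y := by
      intro y; unfold lf; rw [hκ]; congr 2; ring
    simp only [g0] at hc₁ ⊢
    rw [integral_const_mul] at hc₁
    have e1 : (∫ y in Set.Ici z, c₁ * lf κ 4 y) = lI κ 4 z / ∫ y, lf κ 4 y := by
      rw [integral_Ici_eq_integral_Ioi, integral_const_mul]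
      have : (∫ y, lf κ 4 y) ≠ 0 := by
        intro h0; rw [h0] at hc₁; simp at hc₁
      rw [eq_div_iff this]
      unfold lI
      linear_combination (∫ y in Set.Ioi z, lf κ 4 y) * hc₁
    have e2 : C * (n : ℝ) ^ (-(1 : ℝ) / 4) * (1 + z ^ 5) =
        C * (1 + z ^ 5) / (n : ℝ) ^ ((1 : ℝ) / 4) := by
      rw [neg_div, Real.rpow_neg hn0]; ring
    rw [e1, e2]
    exact hm
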